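/- arXiv:2405.00206 — 2 statements merged into one kernel-verified Lean document; each statement's English description precedes it below -/
import Mathlib

section
/- Let n ≥ 1 and r ≥ 1 be integers and let d_1, d_2 be integers with d_1 > r(n−1) and d_2 > r(n−1). Then the number of r-lexicographically increasing n-tuples of integer points in the rectangle P = {(x,y) ∈ ℝ² : 0 ≤ x ≤ d_1, 0 ≤ y ≤ d_2} (the case s = 0) equals Σ_{δ ∈ {0,1,…,r}^{n−1}} C(d_1 − |δ| + ℓ(δ), ℓ(δ)) · ∏_{k=1}^{c(δ)} C(d_2 − w_k(δ) + r + n_k(δ), n_k(δ)), where C(·,·) denotes the binomial coefficient. -/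
/-! The count is organised by the *type* `δ` of a tuple, the vector of successive differences
`a (i+1) - a i` truncated at `r` (`typeVec`). The partial sums `p` of `δ` have the same gaps as `a`,
except that both gaps may be at least `r` (`gap_dichotomy`); hence all the terms
`max (r - (a j - a i)) 0`, and the level sets of `a`, depend only on `δ`.

For a fixed type the conditions on `a` and on `b` decouple (`rLex_iff`). The sequence `a - p` is
weakly increasing in `[0, d1 - |δ|]` and can jump only where `δ i = r`, which gives the first
binomial coefficient (`card_steps`, `card_admA`). Subtracting from `b j` its lower bound turns the
conditions on `b` into: weakly increasing on each level set of `p`, with values between `0` and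
`d2 - w + r`. The level sets are independent, and each contributes one binomial coefficient
(`card_fibrewise`). The hypotheses on `d1` and `d2` make both interval lengths nonnegative. -/

open Finset

noncomputable section

/-- Binomial coefficient with an integer top argument. -/
def ichoose (a : ℤ) (k : ℕ) : ℕ := a.toNat.choose k

/-- An `r`-lexicographically increasing `n`-tuple of integer points in the trapezoid
`P_L = {(x,y) | 0 ≤ x ≤ d1, 0 ≤ y ≤ d2 + s*x}`: the points are `(a j, b j)` for `j : Fin n`. -/
def RLexIncIn (n : ℕ) (s d1 d2 r : ℤ) (a b : Fin n → ℤ) : Prop :=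
  Monotone a ∧
  (∀ i : Fin n, ∀ h : (i : ℕ) + 1 < n,
      a i = a ⟨(i : ℕ) + 1, h⟩ → b i + r ≤ b ⟨(i : ℕ) + 1, h⟩) ∧
  (∀ h : 0 < n, 0 ≤ a ⟨0, h⟩) ∧
  (∀ h : 0 < n, a ⟨n - 1, by omega⟩ ≤ d1) ∧
  (∀ j : Fin n,
    (∑ i ∈ univ.filter (fun i => i < j), max (r - (a j - a i)) 0) ≤ b j ∧
    b j ≤ d2 + s * a j - ∑ k ∈ univ.filter (fun k => j < k), max (r - (a k - a j)) 0)

/-- Partial sums `δ_1 + ⋯ + δ_{j-1}` of the type vector `δ`; the list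
`0, δ_1, δ_1+δ_2, …, δ_1+⋯+δ_{n-1}` is `pSum n r δ j` for `j : Fin n`. -/
def pSum (n r : ℕ) (δ : Fin (n - 1) → Fin (r + 1)) (j : Fin n) : ℤ :=
  ∑ i ∈ univ.filter (fun i : Fin (n - 1) => (i : ℕ) < (j : ℕ)), ((δ i : ℕ) : ℤ)

/-- `|δ| = δ_1 + ⋯ + δ_{n-1}`. -/
def delTotal (n r : ℕ) (δ : Fin (n - 1) → Fin (r + 1)) : ℤ := ∑ i, ((δ i : ℕ) : ℤ)

/-- `ℓ(δ) = 1 + #{i | δ_i = r}`. -/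
def ellStat (n r : ℕ) (δ : Fin (n - 1) → Fin (r + 1)) : ℕ :=
  1 + (univ.filter (fun i : Fin (n - 1) => (δ i : ℕ) = r)).card

/-- The set of distinct values `a_1 < ⋯ < a_{c(δ)}` appearing in the list
`0, δ_1, δ_1+δ_2, …, δ_1+⋯+δ_{n-1}`. -/
def distinctVals (n r : ℕ) (δ : Fin (n - 1) → Fin (r + 1)) : Finset ℤ :=
  univ.image (pSum n r δ)

/-- `n_k(δ)`: the number of occurrences of the value `v = a_k` in the above list. -/
def nOcc (n r : ℕ) (δ : Fin (n - 1) → Fin (r + 1)) (v : ℤ) : ℕ :=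
  (univ.filter (fun j : Fin n => pSum n r δ j = v)).card

/-- `w_k(δ) = Σ_{i=1}^{c(δ)} n_i(δ) · max{r − |a_k − a_i|, 0}`, for `v = a_k`. -/
def wStat (n r : ℕ) (δ : Fin (n - 1) → Fin (r + 1)) (v : ℤ) : ℤ :=
  ∑ j : Fin n, max ((r : ℤ) - |v - pSum n r δ j|) 0

end


/-! ### Counting weakly increasing sequences -/

/-- The functions supported in `S` of sum at most `N`, counted by stars and bars. -/
lemma card_sum_le {ι : Type*} [DecidableEq ι] [DecidableEq (ι → ℕ)] (S : Finset ι) (N : ℕ) :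
    ((range (N + 1)).biUnion (fun k => S.piAntidiag k)).card = (N + S.card).choose S.card := by
  rw [card_biUnion]
  · rw [← Nat.sum_range_multichoose]
    refine sum_congr rfl fun k _ => ?_
    rw [← card_finsuppAntidiag_nat_eq_multichoose, finsuppAntidiag, card_map,
      card_attach]
  · intro i _ j _ hij
    rw [Function.onFun, disjoint_left]
    intro f hf hf'
    simp only [mem_piAntidiag] at hf hf'
    exact hij (hf.1.symm.trans hf'.1)

lemma sum_Iic_succ {m : ℕ} (x : Fin (m + 1) → ℤ) (i : Fin m) :
    ∑ k ∈ Iic i.succ, x k = ∑ k ∈ Iic i.castSucc, x k + x i.succ := by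
  have : Iic i.succ = insert i.succ (Iic i.castSucc) := by
    ext k
    simp only [mem_Iic, mem_insert, Fin.le_def, Fin.ext_iff, Fin.val_succ, Fin.val_castSucc]
    omega
  rw [this, sum_insert, add_comm]
  simp [Fin.le_def]

/-- Sequences in `[0, N]` of length `m + 1` that are weakly increasing and may only jump at the
steps in `T`. They correspond to their nonnegative increments, the initial value included. -/
lemma card_steps (m : ℕ) (T : Finset (Fin m)) (N : ℕ) :
    Set.ncard {a : Fin (m + 1) → ℤ | 0 ≤ a 0 ∧ a (Fin.last m) ≤ N ∧
      ∀ i : Fin m, a i.castSucc ≤ a i.succ ∧ (i ∉ T → a i.castSucc = a i.succ)} =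
      (N + (T.card + 1)).choose (T.card + 1) := by
  classical
  set S : Finset (Fin (m + 1)) := insert 0 (T.map (Fin.succEmb m)) with hS
  have hSc : S.card = T.card + 1 := by
    rw [hS, card_insert_of_notMem, card_map]
    simp [Fin.succ_ne_zero]
  have hsucc : ∀ i : Fin m, i.succ ∈ S ↔ i ∈ T := by
    intro i; simp [hS, Fin.succ_ne_zero]
  rw [← hSc, ← card_sum_le, ← Set.ncard_coe_finset]
  let F : (Fin (m + 1) → ℕ) → (Fin (m + 1) → ℤ) := fun x j => ∑ k ∈ Iic j, (x k : ℤ)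
  have hF0 : ∀ x, F x 0 = x 0 := by
    intro x
    have : Iic (0 : Fin (m + 1)) = {0} := by ext k; simp
    simp [F, this]
  have hFs : ∀ x (i : Fin m), F x i.succ = F x i.castSucc + x i.succ :=
    fun x i => sum_Iic_succ (fun k => (x k : ℤ)) i
  have hFl : ∀ x, F x (Fin.last m) = ((∑ k, x k : ℕ) : ℤ) := by
    intro x
    have : Iic (Fin.last m) = univ := by ext k; simp [Fin.le_last]
    simp [F, this]
  have hinj : Function.Injective F := by
    intro x y h
    ext j
    refine Fin.cases ?_ (fun i => ?_) j
    · have := congrFun h 0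
      rw [hF0, hF0] at this
      exact_mod_cast this
    · have h1 := congrFun h i.succ
      have h2 := congrFun h i.castSucc
      rw [hFs, hFs] at h1
      omega
  refine Eq.trans ?_ (Set.ncard_image_of_injective _ hinj)
  congr 1
  ext a
  simp only [Set.mem_ofPred_eq, Set.mem_image, mem_coe, mem_biUnion, mem_range, mem_piAntidiag]
  constructor
  · rintro ⟨h0, hl, hs⟩
    let x : Fin (m + 1) → ℕ := Fin.cases (a 0).toNat (fun i => (a i.succ - a i.castSucc).toNat)
    have hx0 : x 0 = (a 0).toNat := rfl
    have hxs : ∀ i : Fin m, x i.succ = (a i.succ - a i.castSucc).toNat := fun i => rfl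
    have hFx : F x = a := by
      ext j
      induction j using Fin.induction with
      | zero => rw [hF0, hx0]; omega
      | succ i ih => rw [hFs, ih, hxs]; have := (hs i).1; omega
    have hsupp : ∀ i, x i ≠ 0 → i ∈ S := by
      intro j
      refine Fin.cases (fun _ => by simp [hS]) (fun i hi => ?_) j
      by_contra hc
      rw [hsucc] at hc
      have := (hs i).2 hc
      rw [hxs] at hi
      omega
    have hsum : S.sum x = ∑ k, x k :=
      sum_subset (subset_univ _) fun k _ hk => by_contra fun h => hk (hsupp k h)
    refine ⟨x, ⟨S.sum x, ?_, rfl, hsupp⟩, hFx⟩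
    have := hFl x
    rw [hFx, ← hsum] at this
    omega
  · rintro ⟨x, ⟨k, hk, hsum, hsupp⟩, rfl⟩
    have hsum' : S.sum x = ∑ k, x k :=
      sum_subset (subset_univ _) fun k _ hk => by_contra fun h => hk (hsupp k h)
    refine ⟨by rw [hF0]; omega, by rw [hFl, ← hsum', hsum]; omega, fun i => ?_⟩
    rw [hFs]
    refine ⟨by omega, fun hi => ?_⟩
    have : x i.succ = 0 := by_contra fun h => hi ((hsucc i).1 (hsupp _ h))
    omega

lemma card_monotone_fin (k N : ℕ) :
    Set.ncard {c : Fin k → ℤ | Monotone c ∧ ∀ i, 0 ≤ c i ∧ c i ≤ N} = (N + k).choose k := by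
  cases k with
  | zero =>
    have : {c : Fin 0 → ℤ | Monotone c ∧ ∀ i, 0 ≤ c i ∧ c i ≤ N} = {0} := by
      ext c
      simp only [Set.mem_ofPred_eq, Set.mem_singleton_iff]
      exact ⟨fun _ => Subsingleton.elim _ _, fun _ => ⟨fun i => i.elim0, fun i => i.elim0⟩⟩
    rw [this]; simp
  | succ m =>
    have := card_steps m univ N
    rw [card_univ, Fintype.card_fin] at this
    rw [← this]
    congr 1
    ext c
    simp only [Set.mem_ofPred_eq, mem_univ, not_true_eq_false, false_imp_iff, and_true,
      ← Fin.monotone_iff_le_succ]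
    constructor
    · rintro ⟨h1, h2⟩
      exact ⟨(h2 _).1, (h2 _).2, h1⟩
    · rintro ⟨h1, h2, h3⟩
      exact ⟨h3, fun i => ⟨h1.trans (h3 (Fin.zero_le i)), (h3 (Fin.le_last i)).trans h2⟩⟩

lemma card_monotone {α : Type*} [LinearOrder α] [Fintype α] (N : ℕ) :
    Nat.card {c : α → ℤ // Monotone c ∧ ∀ i, 0 ≤ c i ∧ c i ≤ N} =
      (N + Fintype.card α).choose (Fintype.card α) := by
  rw [← card_monotone_fin, ← Nat.card_coe_set_eq]
  let e := Fintype.orderIsoFinOfCardEq α rfl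
  refine Nat.card_congr (Equiv.subtypeEquiv (e.toEquiv.symm.arrowCongr (Equiv.refl ℤ)) ?_)
  intro c
  constructor
  · rintro ⟨h1, h2⟩
    exact ⟨h1.comp e.monotone, fun i => h2 _⟩
  · rintro ⟨h1, h2⟩
    refine ⟨fun i j hij => ?_, fun i => ?_⟩
    · simpa using h1 (e.symm.monotone hij)
    · simpa using h2 (e.symm i)

/-- Functions that are weakly increasing on every fibre of `p` are independent tuples of weakly
increasing functions, one for each fibre. -/
lemma card_fibrewise {n : ℕ} (p : Fin n → ℤ) (M : ℤ → ℤ) (hM : ∀ j, 0 ≤ M (p j)) :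
    Set.ncard {c : Fin n → ℤ | (∀ i j, i ≤ j → p i = p j → c i ≤ c j) ∧
        ∀ j, 0 ≤ c j ∧ c j ≤ M (p j)} =
      ∏ v ∈ univ.image p, ichoose (M v + ((univ.filter fun j => p j = v).card : ℤ))
        (univ.filter fun j => p j = v).card := by
  classical
  rw [← Nat.card_coe_set_eq]
  let e : {c : Fin n → ℤ | (∀ i j, i ≤ j → p i = p j → c i ≤ c j) ∧
        ∀ j, 0 ≤ c j ∧ c j ≤ M (p j)} ≃
      ((v : univ.image p) → {c : {j : Fin n // p j = v} → ℤ //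
        Monotone c ∧ ∀ i, 0 ≤ c i ∧ c i ≤ ((M v).toNat : ℤ)}) :=
    { toFun := fun c v => ⟨fun j => c.1 j.1, fun i j hij => c.2.1 _ _ hij (i.2.trans j.2.symm),
        fun i => ⟨(c.2.2 _).1, by
          have := (c.2.2 i.1).2
          rw [i.2] at this
          exact this.trans (Int.self_le_toNat _)⟩⟩
      invFun := fun g => ⟨fun j => (g ⟨p j, mem_image_of_mem p (mem_univ j)⟩).1 ⟨j, rfl⟩, by
        constructor
        · intro i j hij hp
          have key : ∀ (v : univ.image p) (h : p j = v),
              (g ⟨p j, mem_image_of_mem p (mem_univ j)⟩).1 ⟨j, rfl⟩ = (g v).1 ⟨j, h⟩ := by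
            rintro ⟨v, hv⟩ h
            dsimp only at h
            subst h
            rfl
          dsimp only
          rw [key ⟨p i, mem_image_of_mem p (mem_univ i)⟩ hp.symm]
          exact (g _).2.1 hij
        · intro j
          have := (g ⟨p j, mem_image_of_mem p (mem_univ j)⟩).2.2 ⟨j, rfl⟩
          have := hM j
          dsimp only at *
          omega⟩
      left_inv := fun c => rfl
      right_inv := fun g => by
        ext ⟨v, hv⟩ ⟨j, hj⟩
        dsimp only at hj
        subst hj
        rfl }
  rw [Nat.card_congr e, Nat.card_pi, ← prod_coe_sort (univ.image p)]
  refine prod_congr rfl fun v _ => ?_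
  rw [card_monotone, Fintype.card_subtype, ichoose]
  obtain ⟨v, hv⟩ := v
  obtain ⟨j, -, rfl⟩ := mem_image.1 hv
  have := hM j
  congr 1
  dsimp only
  omega

/-! ### The type of a tuple -/

/-- The type of a sequence `a`: its successive differences, truncated at `r`. -/
def typeVec (m r : ℕ) (a : Fin (m + 1) → ℤ) : Fin m → Fin (r + 1) :=
  fun i => ⟨min (a i.succ - a i.castSucc).toNat r, by omega⟩

lemma pSum_zero (m r : ℕ) (δ : Fin m → Fin (r + 1)) : pSum (m + 1) r δ 0 = 0 := by
  simp [pSum]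

lemma pSum_succ (m r : ℕ) (δ : Fin m → Fin (r + 1)) (i : Fin m) :
    pSum (m + 1) r δ i.succ = pSum (m + 1) r δ i.castSucc + ((δ i : ℕ) : ℤ) := by
  have : (univ.filter fun k : Fin m => (k : ℕ) < (i.succ : Fin (m + 1))) =
      insert i (univ.filter fun k : Fin m => (k : ℕ) < (i.castSucc : Fin (m + 1))) := by
    ext k
    simp only [mem_filter, mem_univ, true_and, mem_insert, Fin.val_succ, Fin.val_castSucc,
      Fin.ext_iff]
    omega
  unfold pSum
  refine (sum_congr this fun _ _ => rfl).trans ((sum_insert ?_).trans (add_comm _ _))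
  simp

lemma pSum_last (m r : ℕ) (δ : Fin m → Fin (r + 1)) :
    pSum (m + 1) r δ (Fin.last m) = delTotal (m + 1) r δ := by
  unfold pSum delTotal
  rw [filter_true_of_mem]
  intro i _
  exact i.2

lemma pSum_monotone (m r : ℕ) (δ : Fin m → Fin (r + 1)) : Monotone (pSum (m + 1) r δ) := by
  rw [Fin.monotone_iff_le_succ]
  intro i
  rw [pSum_succ]
  omega

lemma delTotal_le (m r : ℕ) (δ : Fin m → Fin (r + 1)) :
    delTotal (m + 1) r δ ≤ (r : ℤ) * m := by
  have : delTotal (m + 1) r δ ≤ ∑ _i : Fin m, (r : ℤ) :=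
    sum_le_sum fun i _ => by have := (δ i).2; omega
  simpa [mul_comm] using this

/-- The conditions on the first coordinates of a tuple of type `δ`. -/
def AdmA (m r : ℕ) (d1 : ℤ) (δ : Fin m → Fin (r + 1)) (a : Fin (m + 1) → ℤ) : Prop :=
  0 ≤ a 0 ∧ a (Fin.last m) ≤ d1 ∧ Monotone a ∧ typeVec m r a = δ

lemma step_iff (m r : ℕ) (δ : Fin m → Fin (r + 1)) (a : Fin (m + 1) → ℤ) :
    (Monotone a ∧ typeVec m r a = δ) ↔
      ∀ i : Fin m, ((δ i : ℕ) : ℤ) ≤ a i.succ - a i.castSucc ∧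
        ((δ i : ℕ) ≠ r → a i.succ - a i.castSucc = (δ i : ℕ)) := by
  rw [Fin.monotone_iff_le_succ, funext_iff, ← forall_and]
  refine forall_congr' fun i => ?_
  have := (δ i).2
  simp only [typeVec, Fin.ext_iff]
  omega

lemma card_admA (m r : ℕ) (d1 : ℤ) (δ : Fin m → Fin (r + 1)) (hd : delTotal (m + 1) r δ ≤ d1) :
    Set.ncard {a | AdmA m r d1 δ a} =
      ichoose (d1 - delTotal (m + 1) r δ + (ellStat (m + 1) r δ : ℤ)) (ellStat (m + 1) r δ) := by
  have hell : ellStat (m + 1) r δ = (univ.filter fun i : Fin m => (δ i : ℕ) = r).card + 1 := by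
    rw [ellStat, add_comm]; rfl
  have hN : (d1 - delTotal (m + 1) r δ + (ellStat (m + 1) r δ : ℤ)).toNat =
      (d1 - delTotal (m + 1) r δ).toNat + ellStat (m + 1) r δ := by omega
  rw [ichoose, hN, hell, ← card_steps]
  refine Eq.trans ?_ (Set.ncard_image_of_injective _ (add_left_injective (pSum (m + 1) r δ)))
  congr 1
  ext a
  simp only [AdmA, step_iff, Set.mem_ofPred_eq, Set.mem_image, mem_filter, mem_univ, true_and]
  constructor
  · rintro ⟨h0, hl, hs⟩
    refine ⟨a - pSum (m + 1) r δ, ⟨?_, ?_, fun i => ?_⟩, by simp⟩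
    · simpa [pSum_zero] using h0
    · rw [Pi.sub_apply, pSum_last]; omega
    · have := hs i
      simp only [Pi.sub_apply, pSum_succ]
      omega
  · rintro ⟨a, ⟨h0, hl, hs⟩, rfl⟩
    refine ⟨?_, ?_, fun i => ?_⟩
    · simpa [pSum_zero] using h0
    · simp only [Pi.add_apply, pSum_last]; omega
    · have := hs i
      simp only [Pi.add_apply, pSum_succ]
      omega

/-- Gaps of `a` and gaps of the partial sums of its type agree, unless both are at
least `r`. -/
lemma gap_dichotomy (m r : ℕ) (δ : Fin m → Fin (r + 1)) (a : Fin (m + 1) → ℤ)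
    (ha : Monotone a ∧ typeVec m r a = δ) (i j : Fin (m + 1)) (hij : i ≤ j) :
    pSum (m + 1) r δ j - pSum (m + 1) r δ i = a j - a i ∨
      ((r : ℤ) ≤ pSum (m + 1) r δ j - pSum (m + 1) r δ i ∧ (r : ℤ) ≤ a j - a i) := by
  rw [step_iff] at ha
  induction j using Fin.induction with
  | zero =>
    obtain rfl : i = 0 := le_antisymm hij (Fin.zero_le i)
    left; ring
  | succ k ih =>
    rcases hij.eq_or_lt with rfl | h
    · left; ring
    · have ih := ih (by simpa [Fin.lt_def, Fin.le_def, Nat.lt_succ_iff] using h)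
      have h1 := ha k
      have h2 : a i ≤ a k.castSucc ∧ pSum (m + 1) r δ i ≤ pSum (m + 1) r δ k.castSucc := by
        have hik : i ≤ k.castSucc := by
          simpa [Fin.lt_def, Fin.le_def, Nat.lt_succ_iff] using h
        exact ⟨((step_iff m r δ a).2 ha).1 hik, pSum_monotone m r δ hik⟩
      rw [pSum_succ]
      omega

lemma max_gap (m r : ℕ) (δ : Fin m → Fin (r + 1)) (a : Fin (m + 1) → ℤ)
    (ha : Monotone a ∧ typeVec m r a = δ) (i j : Fin (m + 1)) (hij : i ≤ j) :
    max ((r : ℤ) - (a j - a i)) 0 =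
      max ((r : ℤ) - (pSum (m + 1) r δ j - pSum (m + 1) r δ i)) 0 := by
  have := gap_dichotomy m r δ a ha i j hij
  omega

/-! ### The second coordinates -/

/-- The lower bound for `b j` in a tuple of type `δ`. -/
def lowB (m r : ℕ) (δ : Fin m → Fin (r + 1)) (j : Fin (m + 1)) : ℤ :=
  ∑ i ∈ univ.filter (fun i => i < j), max ((r : ℤ) - (pSum (m + 1) r δ j - pSum (m + 1) r δ i)) 0

/-- The amount by which the upper bound for `b j` in a tuple of type `δ` falls short of `d2`. -/
def highB (m r : ℕ) (δ : Fin m → Fin (r + 1)) (j : Fin (m + 1)) : ℤ :=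
  ∑ k ∈ univ.filter (fun k => j < k), max ((r : ℤ) - (pSum (m + 1) r δ k - pSum (m + 1) r δ j)) 0

lemma wStat_eq (m r : ℕ) (δ : Fin m → Fin (r + 1)) (j : Fin (m + 1)) :
    wStat (m + 1) r δ (pSum (m + 1) r δ j) = lowB m r δ j + highB m r δ j + r := by
  have hmono := pSum_monotone m r δ
  unfold wStat
  rw [← sum_filter_add_sum_filter_not univ (fun i => i < j), add_assoc, lowB]
  congr 1
  · refine sum_congr rfl fun i hi => ?_
    rw [abs_of_nonneg]
    have := hmono (mem_filter.1 hi).2.le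
    linarith
  · have : (univ.filter fun i => ¬ i < j) = insert j (univ.filter fun k => j < k) := by
      ext k
      simp only [mem_filter, mem_univ, true_and, mem_insert, not_lt, le_iff_eq_or_lt, eq_comm]
    rw [this, sum_insert (by simp), highB, add_comm]
    congr 1
    · refine sum_congr rfl fun i hi => ?_
      rw [abs_of_nonpos]
      · ring_nf
      have := hmono (mem_filter.1 hi).2.le
      linarith
    · simp

lemma wStat_le (m r : ℕ) (δ : Fin m → Fin (r + 1)) (j : Fin (m + 1)) :
    wStat (m + 1) r δ (pSum (m + 1) r δ j) ≤ (r : ℤ) * m + r := by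
  have : wStat (m + 1) r δ (pSum (m + 1) r δ j) ≤ ∑ _i : Fin (m + 1), (r : ℤ) := by
    refine sum_le_sum fun i _ => ?_
    have := abs_nonneg (pSum (m + 1) r δ j - pSum (m + 1) r δ i)
    omega
  refine this.trans (le_of_eq ?_)
  simp
  ring

lemma lowB_succ (m r : ℕ) (δ : Fin m → Fin (r + 1)) (i : Fin m)
    (h : pSum (m + 1) r δ i.castSucc = pSum (m + 1) r δ i.succ) :
    lowB m r δ i.succ = lowB m r δ i.castSucc + r := by
  have : (univ.filter fun k => k < i.succ) =
      insert i.castSucc (univ.filter fun k => k < i.castSucc) := by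
    ext k
    simp only [mem_filter, mem_univ, true_and, mem_insert, Fin.lt_def, Fin.ext_iff,
      Fin.val_succ, Fin.val_castSucc]
    omega
  unfold lowB
  rw [this, sum_insert (by simp), h, add_comm]
  simp

/-- The conditions on the normalised second coordinates `c j = b j - lowB j`. -/
def AdmC (m r : ℕ) (d2 : ℤ) (δ : Fin m → Fin (r + 1)) (c : Fin (m + 1) → ℤ) : Prop :=
  (∀ i j, i ≤ j → pSum (m + 1) r δ i = pSum (m + 1) r δ j → c i ≤ c j) ∧
    ∀ j, 0 ≤ c j ∧ c j ≤ d2 - wStat (m + 1) r δ (pSum (m + 1) r δ j) + r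

/-- On the level sets of a monotone `p`, comparing neighbours is enough. -/
lemma fibre_mono_iff (m : ℕ) (p c : Fin (m + 1) → ℤ) (hp : Monotone p) :
    (∀ i j, i ≤ j → p i = p j → c i ≤ c j) ↔
      ∀ i : Fin m, p i.castSucc = p i.succ → c i.castSucc ≤ c i.succ := by
  constructor
  · intro h i
    exact h _ _ (Fin.castSucc_lt_succ).le
  · intro h i j
    induction j using Fin.induction with
    | zero =>
      intro hij _
      rw [le_antisymm hij (Fin.zero_le i)]
    | succ k ih =>
      intro hij hpe
      rcases hij.eq_or_lt with rfl | hlt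
      · exact le_rfl
      · have hik : i ≤ k.castSucc := by
          simpa [Fin.lt_def, Fin.le_def, Nat.lt_succ_iff] using hlt
        have h1 := hp hik
        have h2 := hp (Fin.castSucc_lt_succ (i := k)).le
        exact (ih hik (by omega)).trans (h k (by omega))

lemma rLex_iff (m r : ℕ) (hr : 1 ≤ r) (d1 d2 : ℤ) (δ : Fin m → Fin (r + 1))
    (a b : Fin (m + 1) → ℤ) :
    (RLexIncIn (m + 1) 0 d1 d2 r a b ∧ typeVec m r a = δ) ↔
      AdmA m r d1 δ a ∧ AdmC m r d2 δ (b - lowB m r δ) := by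
  by_cases ha : Monotone a ∧ typeVec m r a = δ
  swap
  · simp only [RLexIncIn, AdmA]
    tauto
  have hlow : ∀ j, ∑ i ∈ univ.filter (fun i => i < j), max ((r : ℤ) - (a j - a i)) 0 =
      lowB m r δ j := fun j =>
    sum_congr rfl fun i hi => max_gap m r δ a ha i j (mem_filter.1 hi).2.le
  have hhigh : ∀ j, ∑ k ∈ univ.filter (fun k => j < k), max ((r : ℤ) - (a k - a j)) 0 =
      highB m r δ j := fun j =>
    sum_congr rfl fun k hk => max_gap m r δ a ha j k (mem_filter.1 hk).2.le
  have hstep : (∀ i : Fin (m + 1), ∀ h : (i : ℕ) + 1 < m + 1,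
      a i = a ⟨(i : ℕ) + 1, h⟩ → b i + r ≤ b ⟨(i : ℕ) + 1, h⟩) ↔
      ∀ i j, i ≤ j → pSum (m + 1) r δ i = pSum (m + 1) r δ j →
        (b - lowB m r δ) i ≤ (b - lowB m r δ) j := by
    rw [fibre_mono_iff m _ _ (pSum_monotone m r δ)]
    have h1 : (∀ i : Fin (m + 1), ∀ h : (i : ℕ) + 1 < m + 1,
        a i = a ⟨(i : ℕ) + 1, h⟩ → b i + r ≤ b ⟨(i : ℕ) + 1, h⟩) ↔
        ∀ i : Fin m, a i.castSucc = a i.succ → b i.castSucc + r ≤ b i.succ :=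
      ⟨fun h i => h i.castSucc (by simp), fun h i hi => h ⟨i, by omega⟩⟩
    rw [h1]
    refine forall_congr' fun i => ?_
    -- positivity of `r` makes the level sets of `a` and of the partial sums coincide
    have hgap := gap_dichotomy m r δ a ha i.castSucc i.succ (Fin.castSucc_lt_succ).le
    have hl := lowB_succ m r δ i
    simp only [Pi.sub_apply]
    constructor
    · intro h hp
      have := hl hp
      have := h (by omega)
      omega
    · intro h hp
      have hp' : pSum (m + 1) r δ i.castSucc = pSum (m + 1) r δ i.succ := by omega
      have := hl hp'
      have := h hp'
      omega
  have hb : (∀ j, lowB m r δ j ≤ b j ∧ b j ≤ d2 + 0 * a j - highB m r δ j) ↔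
      ∀ j, 0 ≤ (b - lowB m r δ) j ∧
        (b - lowB m r δ) j ≤ d2 - wStat (m + 1) r δ (pSum (m + 1) r δ j) + r := by
    refine forall_congr' fun j => ?_
    rw [wStat_eq, Pi.sub_apply, zero_mul]
    omega
  have h0 : (∀ h : 0 < m + 1, 0 ≤ a ⟨0, h⟩) ↔ 0 ≤ a 0 := ⟨fun h => h (by omega), fun h _ => h⟩
  have hl : (∀ h : 0 < m + 1, a ⟨m + 1 - 1, by omega⟩ ≤ d1) ↔ a (Fin.last m) ≤ d1 :=
    ⟨fun h => h (by omega), fun h _ => h⟩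
  simp only [RLexIncIn, AdmA, AdmC, hlow, hhigh]
  rw [hstep, hb, h0, hl]
  tauto

lemma card_type (m r : ℕ) (hr : 1 ≤ r) (d1 d2 : ℤ) (hd1 : (r : ℤ) * m < d1)
    (hd2 : (r : ℤ) * m < d2) (δ : Fin m → Fin (r + 1)) :
    Set.ncard {p : (Fin (m + 1) → ℤ) × (Fin (m + 1) → ℤ) |
        RLexIncIn (m + 1) 0 d1 d2 r p.1 p.2 ∧ typeVec m r p.1 = δ} =
      ichoose (d1 - delTotal (m + 1) r δ + (ellStat (m + 1) r δ : ℤ)) (ellStat (m + 1) r δ) *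
        ∏ v ∈ distinctVals (m + 1) r δ,
          ichoose (d2 - wStat (m + 1) r δ v + (r : ℤ) + (nOcc (m + 1) r δ v : ℤ))
            (nOcc (m + 1) r δ v) := by
  have hC : Set.ncard {c | AdmC m r d2 δ c} = ∏ v ∈ distinctVals (m + 1) r δ,
      ichoose (d2 - wStat (m + 1) r δ v + (r : ℤ) + (nOcc (m + 1) r δ v : ℤ))
        (nOcc (m + 1) r δ v) :=
    card_fibrewise (pSum (m + 1) r δ) (fun v => d2 - wStat (m + 1) r δ v + r)
      fun j => by have := wStat_le m r δ j; omega
  rw [← card_admA m r d1 δ ((delTotal_le m r δ).trans hd1.le), ← hC, ← Set.ncard_prod]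
  have hinj : Function.Injective (fun q : (Fin (m + 1) → ℤ) × (Fin (m + 1) → ℤ) =>
      (q.1, q.2 - lowB m r δ)) := by
    rintro ⟨a, b⟩ ⟨a', b'⟩ h
    simpa using h
  rw [← Set.ncard_image_of_injective _ hinj]
  congr 1
  ext ⟨a, c⟩
  simp only [rLex_iff m r hr, Set.mem_image, Set.mem_ofPred_eq, Prod.exists, Set.mem_prod,
    Prod.mk.injEq]
  constructor
  · rintro ⟨a, b, h, rfl, rfl⟩
    exact h
  · intro h
    exact ⟨a, c + lowB m r δ, by simpa using h, rfl, by simp⟩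

lemma finite_rLex (m r : ℕ) (d1 d2 : ℤ) :
    {p : (Fin (m + 1) → ℤ) × (Fin (m + 1) → ℤ) |
      RLexIncIn (m + 1) 0 d1 d2 r p.1 p.2}.Finite := by
  refine ((Set.finite_Icc (0 : Fin (m + 1) → ℤ) (fun _ => d1)).prod
    (Set.finite_Icc (0 : Fin (m + 1) → ℤ) (fun _ => d2))).subset ?_
  rintro ⟨a, b⟩ ⟨hm, -, h0, hl, hb⟩
  refine ⟨⟨fun i => (h0 (by omega)).trans (hm (Fin.zero_le i)),
    fun i => (hm (Fin.le_last i)).trans (hl (by omega))⟩, fun j => ?_, fun j => ?_⟩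
  · exact (sum_nonneg fun i _ => le_max_right _ _).trans (hb j).1
  · have h1 := (hb j).2
    have h2 : 0 ≤ ∑ k ∈ univ.filter (fun k => j < k), max ((r : ℤ) - (a k - a j)) 0 :=
      sum_nonneg fun i _ => le_max_right _ _
    dsimp only at *
    linarith

/-- Theorem 1.1 of the paper, `X = ℙ¹×ℙ¹`: for `n ≥ 1`, `r ≥ 1` and
`d_1, d_2 > r(n−1)`, the number of `r`-lexicographically increasing `n`-tuples of integer
points in the rectangle `[0,d_1]×[0,d_2]` equals
`Σ_δ C(d_1−|δ|+ℓ(δ), ℓ(δ)) · ∏_k C(d_2−w_k(δ)+r+n_k(δ), n_k(δ))`. -/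
theorem verlinde_P1P1 (n : ℕ) (hn : 1 ≤ n) (r : ℕ) (hr : 1 ≤ r) (d1 d2 : ℤ)
    (hd1 : (r : ℤ) * ((n : ℤ) - 1) < d1) (hd2 : (r : ℤ) * ((n : ℤ) - 1) < d2) :
    Set.ncard {p : (Fin n → ℤ) × (Fin n → ℤ) | RLexIncIn n 0 d1 d2 (r : ℤ) p.1 p.2} =
      ∑ δ : Fin (n - 1) → Fin (r + 1),
        ichoose (d1 - delTotal n r δ + (ellStat n r δ : ℤ)) (ellStat n r δ) *
          ∏ v ∈ distinctVals n r δ,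
            ichoose (d2 - wStat n r δ v + (r : ℤ) + (nOcc n r δ v : ℤ)) (nOcc n r δ v) := by
  obtain ⟨m, rfl⟩ : ∃ m, n = m + 1 := ⟨n - 1, by omega⟩
  have hm : ((m + 1 : ℕ) : ℤ) - 1 = m := by push_cast; ring
  rw [hm] at hd1 hd2
  rw [← Nat.card_coe_set_eq]
  have hfin := (finite_rLex m r d1 d2).to_subtype
  rw [← Nat.card_congr (Equiv.sigmaFiberEquiv
    (fun q : {p : (Fin (m + 1) → ℤ) × (Fin (m + 1) → ℤ) |
      RLexIncIn (m + 1) 0 d1 d2 (r : ℤ) p.1 p.2} => typeVec m r q.1.1)), Nat.card_sigma]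
  refine sum_congr rfl fun δ _ => ?_
  rw [← card_type m r hr d1 d2 hd1 hd2 δ, ← Nat.card_coe_set_eq]
  exact Nat.card_congr (Equiv.subtypeSubtypeEquivSubtypeInter
    (fun p : (Fin (m + 1) → ℤ) × (Fin (m + 1) → ℤ) => RLexIncIn (m + 1) 0 d1 d2 (r : ℤ) p.1 p.2)
    (fun p => typeVec m r p.1 = δ))
end

section
/- Fix integers n ≥ 1, s ≥ 0, r ≥ 1, and d_1, d_2 with d_1 > r(n−1) and d_2 > r(n−1), and let P_L = {(x,y) ∈ ℝ² : 0 ≤ x ≤ d_1 and 0 ≤ y ≤ d_2 + s·x}. Let W ⊆ A^r be the ℂ-subspace of all f ∈ A^r such that for each i = 1,…,n, every monomial appearing in f has (deg_{x_i}, deg_{y_i}) ∈ P_L. Then W is finite-dimensional and dim_ℂ W equals the number of r-lexicographically increasing n-tuples of integer points in P_L. -/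
/-!
Write `W(N)` for the space of `f ∈ A^r` supported in the trapezoid with upper edge `y = N + s x`
(`f` is then called a section for the bound `N`), and `C(N)` for the set of increasing tuples in
that trapezoid; the claim is `dim W(d2) = |C(d2)|`.

*Upper bound.* Elements of `A^r` vanish to order `r` along every diagonal
`(x_i, y_i) = (x_j, y_j)`. Applying Euler operators `α x_i ∂_{x_i} + β y_i ∂_{y_i} + γ`, each of
which costs one order of vanishing, and restricting to the diagonal gives constraints on the
coefficients of `f`. If the `x`-exponent `a` has maximal sum of squares among the monomials of `f`,
the coefficient of `x^a` is therefore a polynomial in `y` divisible by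
`∏_{i<j} (y_j - y_i)^{max(r - |a_i - a_j|, 0)}` (`pow_dvd_ySlice`). A leading-term argument then
yields a monomial of `f` whose exponents form an increasing tuple (`exists_rlex_coeff`), so a
section is determined by its coefficients at increasing tuples and `dim W(N) ≤ |C(N)|`.

*Lower bound.* Bound the total `y`-degree, and correspondingly `∑_j b_j`, by `e`, which changes
nothing for `N = d2` if `e` is large. For `N ≥ e` the condition on the `y`-degrees is vacuous, and
each increasing tuple is the leading exponent of a product of `r` alternants (`exists_section`):
the column `a_j` is split as `∑_{k<r} ⌊(a_j + k) / r⌋`, and points falling in the same column of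
the `k`-th factor are stacked. This gives `dim W(N) ≥ |C(N)|` for large `N`. To come down to `d2`
it suffices that `dim W(N) - dim W(N - 1) ≤ |C(N)| - |C(N - 1)|` for `N ≥ r (n - 1)`
(`secDeg_step`). A section for `N` that is not one for `N - 1` has a monomial with a point on the
upper edge; choosing it extremal and arguing as above with this point held fixed
(`deficit_bound`, `exists_top_coeff`) produces a nonzero coefficient at a monomial attached
to a tuple of `C(N) \ C(N - 1)`: its last point in the first column where the upper
inequality is an equality is moved up to the edge, and the later points are moved down to
compensate (`topExp`).
-/

open Finset

noncomputable section

/-- The polynomial ring `ℂ[x_1,y_1,…,x_n,y_n]`: `Sum.inl i ↦ x_i`, `Sum.inr i ↦ y_i`. -/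
abbrev PolyRing (n : ℕ) := MvPolynomial (Fin n ⊕ Fin n) ℂ

/-- `f` is alternating for the `S_n`-action `σ·x_i = x_{σ(i)}`, `σ·y_i = y_{σ(i)}`. -/
def IsAlternating (n : ℕ) (f : PolyRing n) : Prop :=
  ∀ σ : Equiv.Perm (Fin n),
    MvPolynomial.rename (Equiv.sumCongr σ σ) f = ((Equiv.Perm.sign σ : ℤ) : ℂ) • f

/-- `A^r`: the ℂ-linear span of products of `r` alternating polynomials. -/
def Ar (n r : ℕ) : Submodule ℂ (PolyRing n) :=
  Submodule.span ℂ
    {f | ∃ g : Fin r → PolyRing n, (∀ m, IsAlternating n (g m)) ∧ f = ∏ m, g m}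

/-- The subspace of polynomials all of whose monomials have
`(deg_{x_i}, deg_{y_i}) ∈ P_L = {(x,y) | 0 ≤ x ≤ d1, 0 ≤ y ≤ d2 + s·x}` for every `i`. -/
def SuppInPoly (n : ℕ) (s d1 d2 : ℤ) : Submodule ℂ (PolyRing n) where
  carrier := {f | ∀ d ∈ f.support, ∀ i : Fin n,
    ((d (Sum.inl i) : ℤ) ≤ d1 ∧ (d (Sum.inr i) : ℤ) ≤ d2 + s * (d (Sum.inl i) : ℤ))}
  add_mem' := by
    intro f g hf hg d hd i
    rcases Finset.mem_union.mp (MvPolynomial.support_add hd) with h | h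
    · exact hf d h i
    · exact hg d h i
  zero_mem' := by
    intro d hd i
    simp at hd
  smul_mem' := by
    intro c f hf d hd i
    exact hf d (MvPolynomial.support_smul hd) i

/-! ### Vanishing along the diagonals and Euler operators -/

/-- The exponent vector `x^a y^b`. -/
def xyExp {n : ℕ} (a b : Fin n → ℕ) : Fin n ⊕ Fin n →₀ ℕ :=
  Finsupp.equivFunOnFinite.symm (Sum.elim a b)

@[simp] lemma xyExp_inl {n : ℕ} (a b : Fin n → ℕ) (i : Fin n) : xyExp a b (Sum.inl i) = a i := rfl
@[simp] lemma xyExp_inr {n : ℕ} (a b : Fin n → ℕ) (i : Fin n) : xyExp a b (Sum.inr i) = b i := rfl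

lemma xyExp_eta {n : ℕ} (μ : Fin n ⊕ Fin n →₀ ℕ) :
    xyExp (fun i => μ (Sum.inl i)) (fun i => μ (Sum.inr i)) = μ := by
  ext (i | i) <;> rfl

lemma xyExp_inj {n : ℕ} {a b a' b' : Fin n → ℕ} (h : xyExp a b = xyExp a' b') :
    a = a' ∧ b = b' := by
  constructor <;> funext i
  · simpa using DFunLike.congr_fun h (Sum.inl i)
  · simpa using DFunLike.congr_fun h (Sum.inr i)

/-- The ideal of the diagonal `(x_i, y_i) = (x_j, y_j)`. -/
def diagIdeal {n : ℕ} (i j : Fin n) : Ideal (PolyRing n) :=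
  Ideal.span {MvPolynomial.X (Sum.inl i) - MvPolynomial.X (Sum.inl j),
    MvPolynomial.X (Sum.inr i) - MvPolynomial.X (Sum.inr j)}

lemma alternating_mem_diagIdeal {n : ℕ} {f : PolyRing n} (hf : IsAlternating n f)
    {i j : Fin n} (hij : i ≠ j) : f ∈ diagIdeal i j := by
  have h1 : (Ideal.Quotient.mkₐ ℂ (diagIdeal i j)).comp
      (MvPolynomial.rename (Equiv.sumCongr (Equiv.swap i j) (Equiv.swap i j)))
      = Ideal.Quotient.mkₐ ℂ (diagIdeal i j) := by
    have hx : (Ideal.Quotient.mk (diagIdeal i j)) (MvPolynomial.X (Sum.inl i))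
        = Ideal.Quotient.mk (diagIdeal i j) (MvPolynomial.X (Sum.inl j)) :=
      Ideal.Quotient.eq.2 (Ideal.subset_span (by simp))
    have hy : (Ideal.Quotient.mk (diagIdeal i j)) (MvPolynomial.X (Sum.inr i))
        = Ideal.Quotient.mk (diagIdeal i j) (MvPolynomial.X (Sum.inr j)) :=
      Ideal.Quotient.eq.2 (Ideal.subset_span (by simp))
    apply MvPolynomial.algHom_ext
    rintro (k | k)
    · rcases eq_or_ne k i with rfl | hki
      · simp [hx]
      · rcases eq_or_ne k j with rfl | hkj
        · simp [hx]
        · simp [Equiv.swap_apply_of_ne_of_ne hki hkj]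
    · rcases eq_or_ne k i with rfl | hki
      · simp [hy]
      · rcases eq_or_ne k j with rfl | hkj
        · simp [hy]
        · simp [Equiv.swap_apply_of_ne_of_ne hki hkj]
  have h2 := DFunLike.congr_fun h1 f
  rw [AlgHom.comp_apply, hf (Equiv.swap i j), Equiv.Perm.sign_swap hij] at h2
  simp only [Units.val_neg, Units.val_one, Int.cast_neg, Int.cast_one, neg_smul, one_smul,
    map_neg] at h2
  have h3 : Ideal.Quotient.mkₐ ℂ (diagIdeal i j) f = 0 := by
    set z := Ideal.Quotient.mkₐ ℂ (diagIdeal i j) f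
    have h4 : (2⁻¹ : ℂ) • (z + z) = z := by
      rw [← two_smul ℂ z, smul_smul]; norm_num
    rw [← h4]
    nth_rewrite 1 [← h2]
    simp
  exact Ideal.Quotient.eq_zero_iff_mem.1 h3

/-- Elements of `A^r` vanish to order `r` along each diagonal. -/
lemma Ar_le_diagIdeal_pow {n r : ℕ} {f : PolyRing n} (hf : f ∈ Ar n r)
    {i j : Fin n} (hij : i ≠ j) : f ∈ diagIdeal i j ^ r := by
  have : Ar n r ≤ ((diagIdeal i j ^ r).restrictScalars ℂ : Submodule ℂ (PolyRing n)) := by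
    refine Submodule.span_le.2 ?_
    rintro _ ⟨g, hg, rfl⟩
    have := Ideal.prod_mem_prod (s := univ) (I := fun _ : Fin r => diagIdeal i j) (x := g)
      (fun m _ => alternating_mem_diagIdeal (hg m) hij)
    simpa using this
  exact this hf

lemma Ar_rename {n r : ℕ} {f : PolyRing n} (hf : f ∈ Ar n r) (σ : Equiv.Perm (Fin n)) :
    MvPolynomial.rename (Equiv.sumCongr σ σ) f = (((Equiv.Perm.sign σ : ℤ) : ℂ) ^ r) • f := by
  induction hf using Submodule.span_induction with
  | mem x h =>
    obtain ⟨g, hg, rfl⟩ := h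
    rw [map_prod, Finset.prod_congr rfl (fun m _ => hg m σ), Finset.prod_smul]
    simp
  | zero => simp
  | add x y _ _ hx hy => rw [map_add, hx, hy, smul_add]
  | smul a x _ hx => rw [map_smul, hx, smul_comm]

lemma Ar_coeff_perm_eq {n r : ℕ} {f : PolyRing n} (hf : f ∈ Ar n r) (σ : Equiv.Perm (Fin n))
    (a b : Fin n → ℕ) : MvPolynomial.coeff (xyExp (a ∘ σ) (b ∘ σ)) f =
      ((Equiv.Perm.sign σ : ℤ) : ℂ) ^ r * MvPolynomial.coeff (xyExp a b) f := by
  have h := MvPolynomial.coeff_rename_mapDomain (Equiv.sumCongr σ σ)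
    (Equiv.injective _) f (xyExp (a ∘ σ) (b ∘ σ))
  have h2 : (xyExp (a ∘ σ) (b ∘ σ)).mapDomain (Equiv.sumCongr σ σ) = xyExp a b := by
    ext c
    rw [← (Equiv.sumCongr σ σ).apply_symm_apply c,
      Finsupp.mapDomain_apply (Equiv.injective _)]
    rcases c with c | c <;> simp
  rw [h2, Ar_rename hf, MvPolynomial.coeff_smul] at h
  rw [← h, smul_eq_mul]

lemma Ar_coeff_perm {n r : ℕ} {f : PolyRing n} (hf : f ∈ Ar n r) (σ : Equiv.Perm (Fin n))
    (a b : Fin n → ℕ) : MvPolynomial.coeff (xyExp (a ∘ σ) (b ∘ σ)) f = 0 ↔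
      MvPolynomial.coeff (xyExp a b) f = 0 := by
  rw [Ar_coeff_perm_eq hf, mul_eq_zero]
  have : (((Equiv.Perm.sign σ : ℤ) : ℂ) ^ r) ≠ 0 := by
    apply pow_ne_zero
    simp
  tauto

lemma derivation_pow_mem {R A : Type*} [CommRing R] [CommRing A] [Algebra R A]
    (D : Derivation R A A) (I : Ideal A) (k : ℕ) :
    ∀ f ∈ I ^ (k + 1), D f ∈ I ^ k := by
  induction k with
  | zero => simp
  | succ k ih =>
    intro f hf
    rw [pow_succ'] at hf
    refine Submodule.mul_induction_on hf ?_ ?_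
    · intro a ha b hb
      rw [D.leibniz, smul_eq_mul, smul_eq_mul]
      refine Ideal.add_mem _ ?_ ?_
      · rw [pow_succ']
        exact Ideal.mul_mem_mul ha (ih b hb)
      · exact Ideal.mul_mem_right _ _ hb
    · intro a b ha hb
      rw [map_add]
      exact Ideal.add_mem _ ha hb

lemma coeff_X_mul_pderiv {σ : Type*} (c : σ) (f : MvPolynomial σ ℂ) (μ : σ →₀ ℕ) :
    MvPolynomial.coeff μ (MvPolynomial.X c * MvPolynomial.pderiv c f) =
      (μ c : ℂ) * MvPolynomial.coeff μ f := by
  classical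
  induction f using MvPolynomial.induction_on' with
  | monomial m a =>
    rw [MvPolynomial.X_mul_pderiv_monomial, MvPolynomial.coeff_smul, MvPolynomial.coeff_monomial]
    split_ifs with h
    · subst h; simp
    · simp
  | add p q hp hq => simp [mul_add, hp, hq]

/-- `φ` is an affine function of the two exponents `(deg_{x_i}, deg_{y_i})`. -/
def AffineAt {n : ℕ} (i : Fin n) (φ : (Fin n ⊕ Fin n →₀ ℕ) → ℂ) : Prop :=
  ∃ α β γ : ℂ, ∀ μ, φ μ = α * μ (Sum.inl i) + β * μ (Sum.inr i) + γ

/-- Euler operators: scaling all coefficients by affine functions of the exponents costs one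
order of vanishing for each function. -/
lemma exists_scaled_mem {n : ℕ} (i : Fin n) (I : Ideal (PolyRing n)) {f : PolyRing n} {r : ℕ}
    (hf : f ∈ I ^ r) (L : List ((Fin n ⊕ Fin n →₀ ℕ) → ℂ)) (hL : ∀ φ ∈ L, AffineAt i φ) :
    ∃ F ∈ I ^ (r - L.length), ∀ μ, MvPolynomial.coeff μ F =
      (L.map (fun φ => φ μ)).prod * MvPolynomial.coeff μ f := by
  induction L with
  | nil => exact ⟨f, by simpa using hf, by simp⟩
  | cons φ L ih =>
    obtain ⟨F, hF, hc⟩ := ih (fun ψ hψ => hL ψ (by simp [hψ]))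
    obtain ⟨α, β, γ, hφ⟩ := hL φ (by simp)
    refine ⟨MvPolynomial.C α * (MvPolynomial.X (Sum.inl i) * MvPolynomial.pderiv (Sum.inl i) F) +
      MvPolynomial.C β * (MvPolynomial.X (Sum.inr i) * MvPolynomial.pderiv (Sum.inr i) F) +
      MvPolynomial.C γ * F, ?_, ?_⟩
    · rcases Nat.eq_zero_or_pos (r - L.length) with h0 | h0
      · have : r - (φ :: L).length = 0 := by simp; omega
        rw [this]; simp
      · obtain ⟨k, hk⟩ : ∃ k, r - L.length = k + 1 := ⟨r - L.length - 1, by omega⟩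
        have hk' : r - (φ :: L).length = k := by simp; omega
        rw [hk] at hF
        rw [hk']
        refine Ideal.add_mem _ (Ideal.add_mem _ ?_ ?_) ?_
        · exact Ideal.mul_mem_left _ _ (Ideal.mul_mem_left _ _ (derivation_pow_mem _ _ _ _ hF))
        · exact Ideal.mul_mem_left _ _ (Ideal.mul_mem_left _ _ (derivation_pow_mem _ _ _ _ hF))
        · exact Ideal.mul_mem_left _ _ (Ideal.pow_le_pow_right (Nat.le_succ k) hF)
    · intro μ
      simp only [MvPolynomial.coeff_add, MvPolynomial.coeff_C_mul, coeff_X_mul_pderiv, hc,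
        List.map_cons, List.prod_cons, hφ]
      ring

/-- If `μ₀` is the only monomial of `F` in its fibre under the renaming `g`, its coefficient
survives the renaming. -/
lemma coeff_rename_of_unique {σ τ : Type*} (g : σ → τ) (F : MvPolynomial σ ℂ) (μ₀ : σ →₀ ℕ)
    (h : ∀ μ ∈ F.support, μ.mapDomain g = μ₀.mapDomain g → μ = μ₀) :
    MvPolynomial.coeff (μ₀.mapDomain g) (MvPolynomial.rename g F) = MvPolynomial.coeff μ₀ F := by
  classical
  conv_lhs => rw [MvPolynomial.as_sum F]
  rw [map_sum, MvPolynomial.coeff_sum]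
  simp only [MvPolynomial.rename_monomial, MvPolynomial.coeff_monomial]
  by_cases h0 : μ₀ ∈ F.support
  · rw [Finset.sum_eq_single_of_mem μ₀ h0]
    · simp
    · intro μ hμ hne
      rw [if_neg]
      exact fun he => hne (h μ hμ he)
  · rw [Finset.sum_eq_zero]
    · exact (MvPolynomial.notMem_support_iff.1 h0).symm
    · intro μ hμ
      rw [if_neg]
      intro he
      exact h0 (h μ hμ he ▸ hμ)

/-! ### Restriction to a diagonal and slices in the `y`-variables -/

/-- The map sending `j` to `i` and fixing everything else. -/
def collapse {n : ℕ} (i j : Fin n) (k : Fin n) : Fin n := if k = j then i else k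

lemma sum_ite_collapse {n : ℕ} {i j : Fin n} (hij : i ≠ j) (v : Fin n → ℕ) (l : Fin n) :
    (∑ k, if collapse i j k = l then v k else 0) =
      if l = i then v i + v j else if l = j then 0 else v l := by
  unfold collapse
  rw [← Finset.sum_filter]
  split_ifs with h1 h2
  · subst h1
    have : (univ.filter fun k => (if k = j then l else k) = l) = {l, j} := by
      ext k; simp only [mem_filter, mem_univ, true_and, mem_insert, mem_singleton]
      split_ifs with h <;> simp [h]
    rw [this, Finset.sum_pair hij]
  · rw [Finset.sum_eq_zero]
    intro k hk
    simp only [mem_filter, mem_univ, true_and] at hk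
    split_ifs at hk with h
    · exact absurd hk.symm h1
    · exact absurd (hk.trans h2) h
  · have : (univ.filter fun k => (if k = j then i else k) = l) = {l} := by
      ext k; simp only [mem_filter, mem_univ, true_and, mem_singleton]
      split_ifs with h
      · subst h
        exact ⟨fun h => absurd h.symm h1, fun h => absurd h.symm h2⟩
      · exact Iff.rfl
    rw [this, Finset.sum_singleton]

lemma mapDomain_apply_fintype {σ τ : Type*} [Fintype σ] [DecidableEq τ] (g : σ → τ)
    (μ : σ →₀ ℕ) (c : τ) : μ.mapDomain g c = ∑ k, if g k = c then μ k else 0 := by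
  rw [Finsupp.mapDomain, Finsupp.sum_fintype _ _ (by simp), Finsupp.finsetSum_apply]
  exact Finset.sum_congr rfl fun k _ => Finsupp.single_apply

lemma mapDomain_collapse_inl {n : ℕ} {i j : Fin n} (hij : i ≠ j) (h : Fin n → Fin n)
    (μ : Fin n ⊕ Fin n →₀ ℕ) (l : Fin n) :
    μ.mapDomain (Sum.map (collapse i j) h) (Sum.inl l) =
      if l = i then μ (Sum.inl i) + μ (Sum.inl j) else if l = j then 0 else μ (Sum.inl l) := by
  rw [mapDomain_apply_fintype, Fintype.sum_sum_type]
  simpa using sum_ite_collapse hij (fun k => μ (Sum.inl k)) l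

lemma mapDomain_collapse_inr {n : ℕ} {i j : Fin n} (hij : i ≠ j) (h : Fin n → Fin n)
    (μ : Fin n ⊕ Fin n →₀ ℕ) (l : Fin n) :
    μ.mapDomain (Sum.map h (collapse i j)) (Sum.inr l) =
      if l = i then μ (Sum.inr i) + μ (Sum.inr j) else if l = j then 0 else μ (Sum.inr l) := by
  rw [mapDomain_apply_fintype, Fintype.sum_sum_type]
  simpa using sum_ite_collapse hij (fun k => μ (Sum.inr k)) l

lemma mapDomain_id_inr {n : ℕ} (h : Fin n → Fin n)
    (μ : Fin n ⊕ Fin n →₀ ℕ) (l : Fin n) :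
    μ.mapDomain (Sum.map h id) (Sum.inr l) = μ (Sum.inr l) := by
  rw [mapDomain_apply_fintype, Fintype.sum_sum_type]
  simp

lemma rename_collapse_X {n : ℕ} {i j : Fin n} (h : Fin n → Fin n) :
    MvPolynomial.rename (R := ℂ) (Sum.map (collapse i j) h)
      (MvPolynomial.X (Sum.inl i) - MvPolynomial.X (Sum.inl j)) = 0 := by
  rw [map_sub, MvPolynomial.rename_X, MvPolynomial.rename_X]
  simp [collapse]

lemma rename_collapse_Y {n : ℕ} {i j : Fin n} (h : Fin n → Fin n) :
    MvPolynomial.rename (R := ℂ) (Sum.map h (collapse i j))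
      (MvPolynomial.X (Sum.inr i) - MvPolynomial.X (Sum.inr j)) = 0 := by
  rw [map_sub, MvPolynomial.rename_X, MvPolynomial.rename_X]
  simp [collapse]

/-- A coefficient of a polynomial vanishing to order `r` along a diagonal is zero as soon as
fewer than `r` affine functions of the exponents separate it from the other monomials with the
same restriction to the diagonal. -/
lemma coeff_eq_zero_of_separated {n r : ℕ} {i j : Fin n} (hij : i ≠ j) {f : PolyRing n}
    (hf : f ∈ diagIdeal i j ^ r) (L : List ((Fin n ⊕ Fin n →₀ ℕ) → ℂ))
    (hL : ∀ φ ∈ L, AffineAt i φ) (hlen : L.length < r) (μ₀ : Fin n ⊕ Fin n →₀ ℕ)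
    (h0 : ∀ φ ∈ L, φ μ₀ ≠ 0)
    (h : ∀ μ ∈ f.support,
      (∀ k, k ≠ i → k ≠ j → μ (Sum.inl k) = μ₀ (Sum.inl k) ∧ μ (Sum.inr k) = μ₀ (Sum.inr k)) →
      μ (Sum.inl i) + μ (Sum.inl j) = μ₀ (Sum.inl i) + μ₀ (Sum.inl j) →
      μ (Sum.inr i) + μ (Sum.inr j) = μ₀ (Sum.inr i) + μ₀ (Sum.inr j) →
      μ ≠ μ₀ → ∃ φ ∈ L, φ μ = 0) :
    MvPolynomial.coeff μ₀ f = 0 := by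
  obtain ⟨F, hF, hc⟩ := exists_scaled_mem i _ hf L hL
  have hF1 : F ∈ diagIdeal i j := Ideal.pow_le_self (by omega) hF
  have hz : MvPolynomial.rename (Sum.map (collapse i j) (collapse i j)) F = 0 := by
    have : diagIdeal i j ≤ RingHom.ker (MvPolynomial.rename (R := ℂ)
        (Sum.map (collapse i j) (collapse i j))) := by
      refine Ideal.span_le.2 ?_
      intro p hp
      rcases hp with rfl | rfl
      · exact rename_collapse_X _
      · exact rename_collapse_Y _
    exact this hF1
  have hu := coeff_rename_of_unique (Sum.map (collapse i j) (collapse i j)) F μ₀ (by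
    intro μ hμ he
    by_contra hne
    have hcμ := MvPolynomial.mem_support_iff.1 hμ
    rw [hc] at hcμ
    have hμf : μ ∈ f.support := MvPolynomial.mem_support_iff.2 (right_ne_zero_of_mul hcμ)
    have hl := fun l => DFunLike.congr_fun he (Sum.inl l)
    have hr := fun l => DFunLike.congr_fun he (Sum.inr l)
    simp only [mapDomain_collapse_inl hij] at hl
    simp only [mapDomain_collapse_inr hij] at hr
    obtain ⟨φ, hφ, hφ0⟩ := h μ hμf (by
      intro k hki hkj
      have h1 := hl k
      have h2 := hr k
      simp only [hki, hkj, if_false] at h1 h2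
      exact ⟨h1, h2⟩) (by simpa using hl i) (by simpa using hr i) hne
    apply left_ne_zero_of_mul hcμ
    exact List.prod_eq_zero (List.mem_map.2 ⟨φ, hφ, hφ0⟩))
  rw [hz, MvPolynomial.coeff_zero, hc] at hu
  rcases mul_eq_zero.1 hu.symm with h1 | h1
  · rw [List.prod_eq_zero_iff, List.mem_map] at h1
    obtain ⟨φ, hφ, hφ0⟩ := h1
    exact absurd hφ0 (h0 φ hφ)
  · exact h1

/-- The coefficient of `x^a ∏_{z ∈ Z} y_z^{top z}` in `f`, kept as a polynomial in the `y`
variables (including the factor `∏_{z ∈ Z} y_z^{top z}`). -/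
def ySlice {n : ℕ} (a : Fin n → ℕ) (Z : Finset (Fin n)) (top : Fin n → ℕ) (f : PolyRing n) :
    MvPolynomial (Fin n) ℂ :=
  ∑ μ ∈ f.support.filter (fun μ => (∀ k, μ (Sum.inl k) = a k) ∧ ∀ z ∈ Z, μ (Sum.inr z) = top z),
    MvPolynomial.monomial (Finsupp.equivFunOnFinite.symm fun k => μ (Sum.inr k))
      (MvPolynomial.coeff μ f)

lemma coeff_ySlice {n : ℕ} (a : Fin n → ℕ) (Z : Finset (Fin n)) (top : Fin n → ℕ)
    (f : PolyRing n) (b : Fin n →₀ ℕ) :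
    MvPolynomial.coeff b (ySlice a Z top f) =
      if ∀ z ∈ Z, b z = top z then MvPolynomial.coeff (xyExp a b) f else 0 := by
  unfold ySlice
  rw [MvPolynomial.coeff_sum]
  simp only [MvPolynomial.coeff_monomial]
  have key : ∀ μ : Fin n ⊕ Fin n →₀ ℕ, (∀ k, μ (Sum.inl k) = a k) →
      (Finsupp.equivFunOnFinite.symm fun k => μ (Sum.inr k)) = b → μ = xyExp a b := by
    intro μ h1 h2
    ext (k | k)
    · exact h1 k
    · exact DFunLike.congr_fun h2 k
  split_ifs with hb
  · by_cases h0 : xyExp a b ∈ f.support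
    · rw [Finset.sum_eq_single_of_mem (xyExp a b)]
      · rw [if_pos]
        ext k; rfl
      · simp only [mem_filter, h0, true_and]
        exact ⟨fun k => rfl, fun z hz => hb z hz⟩
      · intro μ hμ hne
        rw [if_neg]
        intro he
        exact hne (key μ (mem_filter.1 hμ).2.1 he)
    · rw [Finset.sum_eq_zero]
      · exact (MvPolynomial.notMem_support_iff.1 h0).symm
      · intro μ hμ
        rw [if_neg]
        intro he
        exact h0 (key μ (mem_filter.1 hμ).2.1 he ▸ (mem_filter.1 hμ).1)
  · rw [Finset.sum_eq_zero]
    intro μ hμ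
    rw [if_neg]
    intro he
    apply hb
    intro z hz
    rw [← he]
    exact (mem_filter.1 hμ).2.2 z hz

lemma ySlice_Y_mul {n : ℕ} (a : Fin n → ℕ) (Z : Finset (Fin n)) (top : Fin n → ℕ)
    (f : PolyRing n) {i : Fin n} (hi : i ∉ Z) :
    ySlice a Z top (MvPolynomial.X (Sum.inr i) * f) = MvPolynomial.X i * ySlice a Z top f := by
  ext b
  rw [coeff_ySlice, MvPolynomial.coeff_X_mul', MvPolynomial.coeff_X_mul', coeff_ySlice]
  have h1 : Sum.inr i ∈ (xyExp a b).support ↔ i ∈ b.support := by simp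
  have h2 : xyExp a b - Finsupp.single (Sum.inr i) 1 = xyExp a ⇑(b - Finsupp.single i 1 : Fin n →₀ ℕ) := by
    ext (k | k)
    · simp
    · simp [Finsupp.single_apply]
  have h3 : (∀ z ∈ Z, (b - Finsupp.single i 1 : Fin n →₀ ℕ) z = top z) ↔ ∀ z ∈ Z, b z = top z := by
    refine forall₂_congr fun z hz => ?_
    have : i ≠ z := fun h => hi (h ▸ hz)
    simp [this]
  rw [h2]
  simp only [h1, h3]
  split_ifs <;> rfl

lemma ySlice_sub {n : ℕ} (a : Fin n → ℕ) (Z : Finset (Fin n)) (top : Fin n → ℕ)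
    (f g : PolyRing n) : ySlice a Z top (f - g) = ySlice a Z top f - ySlice a Z top g := by
  ext b
  simp only [coeff_ySlice, MvPolynomial.coeff_sub]
  split_ifs <;> simp

lemma ySlice_pow_mul {n : ℕ} (a : Fin n → ℕ) (Z : Finset (Fin n)) (top : Fin n → ℕ)
    {i j : Fin n} (hi : i ∉ Z) (hj : j ∉ Z) (m : ℕ) (f : PolyRing n) :
    ySlice a Z top ((MvPolynomial.X (Sum.inr i) - MvPolynomial.X (Sum.inr j)) ^ m * f) =
      (MvPolynomial.X i - MvPolynomial.X j) ^ m * ySlice a Z top f := by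
  induction m with
  | zero => simp
  | succ m ih =>
    rw [pow_succ', mul_assoc, sub_mul, ySlice_sub, ySlice_Y_mul _ _ _ _ hi, ySlice_Y_mul _ _ _ _ hj,
      ih]
    ring

/-- If the exponents `a` are extremal in the pair `(i, j)` then the corresponding coefficient of
`f` is divisible by `(y_i - y_j)^{r - |a_i - a_j|}`. -/
lemma pow_dvd_ySlice {n r : ℕ} {i j : Fin n} (hij : i ≠ j) {f : PolyRing n}
    (hf : f ∈ diagIdeal i j ^ r) (a : Fin n → ℕ) (Z : Finset (Fin n)) (top : Fin n → ℕ)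
    (hi : i ∉ Z) (hj : j ∉ Z) (h : ∀ μ ∈ f.support, (∀ z ∈ Z, μ (Sum.inr z) = top z) →
      (∀ k, k ≠ i → k ≠ j → μ (Sum.inl k) = a k) →
      μ (Sum.inl i) + μ (Sum.inl j) = a i + a j →
      min (a i) (a j) ≤ μ (Sum.inl i) ∧ μ (Sum.inl i) ≤ max (a i) (a j)) :
    (MvPolynomial.X i - MvPolynomial.X j) ^ (r - (max (a i) (a j) - min (a i) (a j))) ∣
      ySlice a Z top f := by
  set T := (Finset.Icc (min (a i) (a j)) (max (a i) (a j))).erase (a i) with hT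
  set L : List ((Fin n ⊕ Fin n →₀ ℕ) → ℂ) :=
    T.toList.map (fun (t : ℕ) μ => (μ (Sum.inl i) : ℂ) - t) with hLdef
  have hlen : L.length = max (a i) (a j) - min (a i) (a j) := by
    rw [hLdef, List.length_map, Finset.length_toList, hT, Finset.card_erase_of_mem, Nat.card_Icc]
    · omega
    · rw [mem_Icc]; omega
  obtain ⟨F, hF, hc⟩ := exists_scaled_mem i _ hf L (by
    intro φ hφ
    obtain ⟨t, _, rfl⟩ := List.mem_map.1 hφ
    exact ⟨1, 0, -t, fun μ => by ring⟩)
  rw [hlen] at hF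
  set m := r - (max (a i) (a j) - min (a i) (a j)) with hm
  set g : Fin n ⊕ Fin n → Fin n ⊕ Fin n := Sum.map (collapse i j) id with hg
  -- restricting to `x_i = x_j` turns the ideal of the diagonal into a principal ideal
  have hdvd : (MvPolynomial.X (Sum.inr i) - MvPolynomial.X (Sum.inr j)) ^ m ∣
      MvPolynomial.rename g F := by
    rw [← Ideal.mem_span_singleton, ← Ideal.span_singleton_pow]
    have h1 : (diagIdeal i j).map (MvPolynomial.rename (R := ℂ) g) ≤
        Ideal.span {MvPolynomial.X (Sum.inr i) - MvPolynomial.X (Sum.inr j)} := by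
      rw [diagIdeal, Ideal.map_span, Ideal.span_le]
      rintro _ ⟨p, rfl | rfl, rfl⟩
      · rw [hg]
        erw [rename_collapse_X]
        exact Ideal.zero_mem _
      · apply Ideal.subset_span
        simp [hg]
    have h2 := Ideal.mem_map_of_mem (MvPolynomial.rename (R := ℂ) g) hF
    rw [Ideal.map_pow] at h2
    exact Ideal.pow_right_mono h1 m h2
  obtain ⟨q, hq⟩ := hdvd
  set c : ℂ := (T.toList.map (fun t : ℕ => ((a i : ℂ) - t))).prod with hcdef
  have hc0 : c ≠ 0 := by
    rw [hcdef, Ne, List.prod_eq_zero_iff, List.mem_map]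
    rintro ⟨t, ht, h0⟩
    have ht' := Finset.mem_toList.1 ht
    have : a i = t := by exact_mod_cast sub_eq_zero.1 h0
    rw [hT, ← this] at ht'
    simp at ht'
  set a' : Fin n → ℕ := fun l => if l = i then a i + a j else if l = j then 0 else a l with ha'
  have hmd : ∀ b : Fin n → ℕ, (xyExp a b).mapDomain g = xyExp a' b := by
    intro b
    ext (k | k)
    · rw [hg, mapDomain_collapse_inl hij]; rfl
    · rw [hg, mapDomain_id_inr]; rfl
  have hs : ySlice a' Z top (MvPolynomial.rename g F) = MvPolynomial.C c * ySlice a Z top f := by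
    ext b
    rw [MvPolynomial.coeff_C_mul, coeff_ySlice, coeff_ySlice]
    split_ifs with hb
    · rw [← hmd, coeff_rename_of_unique, hc, hLdef, List.map_map]
      · rfl
      · intro μ hμ he
        have hcμ := MvPolynomial.mem_support_iff.1 hμ
        rw [hc] at hcμ
        have hμf : μ ∈ f.support := MvPolynomial.mem_support_iff.2 (right_ne_zero_of_mul hcμ)
        have hl := fun l => DFunLike.congr_fun he (Sum.inl l)
        have hr := fun l => DFunLike.congr_fun he (Sum.inr l)
        simp only [hg, mapDomain_collapse_inl hij, xyExp_inl] at hl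
        simp only [hg, mapDomain_id_inr, xyExp_inr] at hr
        have hoff : ∀ k, k ≠ i → k ≠ j → μ (Sum.inl k) = a k := by
          intro k hki hkj
          have h1 := hl k
          simpa only [hki, hkj, if_false] using h1
        have hsum : μ (Sum.inl i) + μ (Sum.inl j) = a i + a j := by simpa using hl i
        have hb2 := h μ hμf (fun z hz => (hr z).trans (hb z hz)) hoff hsum
        have hii : μ (Sum.inl i) = a i := by
          by_contra hne
          apply left_ne_zero_of_mul hcμ
          refine List.prod_eq_zero (List.mem_map.2 ⟨fun ν => (ν (Sum.inl i) : ℂ) - (μ (Sum.inl i) : ℕ),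
            List.mem_map.2 ⟨μ (Sum.inl i), ?_, rfl⟩, sub_self _⟩)
          rw [Finset.mem_toList, hT, mem_erase, mem_Icc]
          exact ⟨hne, hb2⟩
        ext (k | k)
        · rcases eq_or_ne k i with rfl | hki
          · exact hii
          · rcases eq_or_ne k j with rfl | hkj
            · simp only [xyExp_inl]; omega
            · exact hoff k hki hkj
        · exact hr k
    · simp
  rw [hq, ySlice_pow_mul _ _ _ hi hj] at hs
  have h3 : (MvPolynomial.X i - MvPolynomial.X j) ^ m ∣
      MvPolynomial.C c * ySlice a Z top f := ⟨_, hs.symm⟩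
  have h4 : ySlice a Z top f = MvPolynomial.C c⁻¹ * (MvPolynomial.C c * ySlice a Z top f) := by
    rw [← mul_assoc, ← MvPolynomial.C_mul, inv_mul_cancel₀ hc0, MvPolynomial.C_1, one_mul]
  rw [h4]
  exact Dvd.dvd.mul_left h3 _

/-! ### Leading monomials of products of differences -/

/-- `m` is the unique monomial of `P` of maximal `ω`-weight. -/
def IsLead {σ : Type*} (ω : (σ →₀ ℕ) →+ ℕ) (P : MvPolynomial σ ℂ) (m : σ →₀ ℕ) : Prop :=
  MvPolynomial.coeff m P ≠ 0 ∧ ∀ m' ∈ P.support, m' ≠ m → ω m' < ω m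

lemma IsLead.le {σ : Type*} {ω : (σ →₀ ℕ) →+ ℕ} {P : MvPolynomial σ ℂ} {m : σ →₀ ℕ}
    (h : IsLead ω P m) : ∀ m' ∈ P.support, ω m' ≤ ω m := by
  intro m' hm'
  rcases eq_or_ne m' m with rfl | hne
  · exact le_rfl
  · exact (h.2 m' hm' hne).le

lemma IsLead.coeff_mul {σ : Type*} {ω : (σ →₀ ℕ) →+ ℕ} {P h : MvPolynomial σ ℂ} {m q : σ →₀ ℕ}
    (hP : IsLead ω P m) (hq : ∀ q' ∈ h.support, ω q' ≤ ω q) :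
    MvPolynomial.coeff (m + q) (P * h) = MvPolynomial.coeff m P * MvPolynomial.coeff q h := by
  classical
  rw [MvPolynomial.coeff_mul, Finset.sum_eq_single_of_mem (m, q) (by simp)]
  rintro ⟨u, v⟩ huv hne
  rw [Finset.HasAntidiagonal.mem_antidiagonal] at huv
  simp only at huv ⊢
  by_contra h0
  have hu := MvPolynomial.mem_support_iff.2 (left_ne_zero_of_mul h0)
  have hv := MvPolynomial.mem_support_iff.2 (right_ne_zero_of_mul h0)
  have hum : u ≠ m := by
    rintro rfl
    exact hne (by rw [add_left_cancel huv])
  have h1 := hP.2 u hu hum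
  have h2 := hq v hv
  have h3 : ω u + ω v = ω m + ω q := by rw [← map_add, ← map_add, huv]
  omega

lemma IsLead.mul {σ : Type*} {ω : (σ →₀ ℕ) →+ ℕ} {P Q : MvPolynomial σ ℂ} {m q : σ →₀ ℕ}
    (hP : IsLead ω P m) (hQ : IsLead ω Q q) : IsLead ω (P * Q) (m + q) := by
  classical
  refine ⟨?_, ?_⟩
  · rw [hP.coeff_mul hQ.le]
    exact mul_ne_zero hP.1 hQ.1
  · intro t ht hne
    obtain ⟨u, hu, v, hv, rfl⟩ := Finset.mem_add.1 (MvPolynomial.support_mul _ _ ht)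
    rw [map_add, map_add]
    rcases eq_or_ne u m with rfl | hum
    · have := hQ.2 v hv (by rintro rfl; exact hne rfl)
      omega
    · have h1 := hP.2 u hu hum
      have h2 := hQ.le v hv
      omega

lemma isLead_one {σ : Type*} (ω : (σ →₀ ℕ) →+ ℕ) : IsLead ω (1 : MvPolynomial σ ℂ) 0 := by
  classical
  refine ⟨by simp, ?_⟩
  intro m' hm' hne
  rw [MvPolynomial.mem_support_iff, MvPolynomial.coeff_one] at hm'
  exact absurd (by simpa using hm' : (0 : σ →₀ ℕ) = m').symm hne

lemma IsLead.pow {σ : Type*} {ω : (σ →₀ ℕ) →+ ℕ} {P : MvPolynomial σ ℂ} {m : σ →₀ ℕ}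
    (hP : IsLead ω P m) (k : ℕ) : IsLead ω (P ^ k) (k • m) := by
  induction k with
  | zero => simpa using isLead_one ω
  | succ k ih => rw [pow_succ, succ_nsmul]; exact ih.mul hP

lemma IsLead.prod {σ ι : Type*} {ω : (σ →₀ ℕ) →+ ℕ} (s : Finset ι) {P : ι → MvPolynomial σ ℂ}
    {m : ι → σ →₀ ℕ} (hP : ∀ k ∈ s, IsLead ω (P k) (m k)) :
    IsLead ω (∏ k ∈ s, P k) (∑ k ∈ s, m k) := by
  classical
  induction s using Finset.induction_on with
  | empty => simpa using isLead_one ω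
  | insert a s ha ih =>
    rw [Finset.prod_insert ha, Finset.sum_insert ha]
    exact (hP a (by simp)).mul (ih fun k hk => hP k (by simp [hk]))

/-- The pairs `i < j`. -/
def incPairs (n : ℕ) : Finset (Fin n × Fin n) := univ.filter fun p => p.1 < p.2

lemma sum_incPairs {n : ℕ} (F : Fin n → Fin n → ℕ) :
    ∑ p ∈ incPairs n, F p.1 p.2 = ∑ i, ∑ j, if i < j then F i j else 0 := by
  rw [incPairs, Finset.sum_filter, ← Finset.univ_product_univ, Finset.sum_product]

/-- The linear form `y_j - y_i`, for a pair `(i, j)`. -/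
def yDiff {n : ℕ} (p : Fin n × Fin n) : MvPolynomial (Fin n) ℂ :=
  MvPolynomial.X p.2 - MvPolynomial.X p.1

lemma yDiff_irreducible {n : ℕ} {p : Fin n × Fin n} (hp : p.1 ≠ p.2) : Irreducible (yDiff p) := by
  have := MvPolynomial.irreducible_mul_X_add (1 : MvPolynomial (Fin n) ℂ)
    (-MvPolynomial.X p.1) p.2 one_ne_zero (by simp)
    (by rw [MvPolynomial.vars_neg, MvPolynomial.vars_X]; simpa using hp.symm) isRelPrime_one_left
  rwa [one_mul, ← sub_eq_add_neg] at this

lemma yDiff_isRelPrime {n : ℕ} {p q : Fin n × Fin n} (hp : p.1 < p.2) (hq : q.1 < q.2)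
    (hpq : p ≠ q) : IsRelPrime (yDiff p) (yDiff q) := by
  rw [(yDiff_irreducible hp.ne).isRelPrime_iff_not_dvd]
  rintro ⟨h, hh⟩
  have key : ∀ v : Fin n → ℂ, v p.1 = v p.2 → v q.1 = v q.2 := by
    intro v hv
    have := congrArg (MvPolynomial.eval v) hh
    simp only [yDiff, map_sub, map_mul, MvPolynomial.eval_X, hv, sub_self, zero_mul] at this
    exact (sub_eq_zero.1 this).symm
  obtain ⟨p1, p2⟩ := p
  obtain ⟨q1, q2⟩ := q
  simp only at hp hq key
  by_cases h1 : q1 = p1 ∨ q1 = p2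
  · have h2 : q2 ≠ p1 ∧ q2 ≠ p2 := by
      constructor
      · rintro rfl
        rcases h1 with rfl | rfl
        · exact lt_irrefl _ hq
        · exact lt_asymm hp hq
      · rintro rfl
        rcases h1 with rfl | rfl
        · exact hpq rfl
        · exact lt_irrefl _ hq
    have := key (fun k => if k = q2 then 1 else 0) (by simp [h2.1.symm, h2.2.symm])
    simp [hq.ne] at this
  · push Not at h1
    have := key (fun k => if k = q1 then 1 else 0) (by simp [h1.1.symm, h1.2.symm])
    simp [ne_of_gt hq] at this

/-- The weight `∑_j j b_j`. -/
def idxWeight (n : ℕ) : (Fin n →₀ ℕ) →+ ℕ := Finsupp.weight fun j : Fin n => (j : ℕ)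

lemma yDiff_isLead {n : ℕ} {p : Fin n × Fin n} (hp : p.1 < p.2) :
    IsLead (idxWeight n) (yDiff p) (Finsupp.single p.2 1) := by
  have hne : (Finsupp.single p.1 1 : Fin n →₀ ℕ) ≠ Finsupp.single p.2 1 := by
    intro h
    have := DFunLike.congr_fun h p.2
    simp [hp.ne] at this
  refine ⟨?_, ?_⟩
  · rw [yDiff, MvPolynomial.coeff_sub, MvPolynomial.coeff_X, MvPolynomial.coeff_X]
    simp [hne]
  · intro m' hm' hm2
    rw [MvPolynomial.mem_support_iff, yDiff, MvPolynomial.coeff_sub, MvPolynomial.coeff_X,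
      MvPolynomial.coeff_X, if_neg (Ne.symm hm2)] at hm'
    have : Finsupp.single p.1 1 = m' := by
      by_contra h
      simp [h] at hm'
    rw [← this, idxWeight, Finsupp.weight_single, Finsupp.weight_single]
    simpa using hp

/-- `∏_{i<j} (y_j - y_i)^{m_{ij}}`. -/
def yProd {n : ℕ} (m : Fin n → Fin n → ℕ) : MvPolynomial (Fin n) ℂ :=
  ∏ p ∈ incPairs n, yDiff p ^ m p.1 p.2

lemma yProd_ne_zero {n : ℕ} (m : Fin n → Fin n → ℕ) : yProd m ≠ 0 := by
  rw [yProd, Finset.prod_ne_zero_iff]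
  intro p hp
  exact pow_ne_zero _ (yDiff_irreducible (mem_filter.1 hp).2.ne).ne_zero

lemma yProd_isLead {n : ℕ} (m : Fin n → Fin n → ℕ) :
    IsLead (idxWeight n) (yProd m)
      (Finsupp.equivFunOnFinite.symm fun j => ∑ i ∈ univ.filter (· < j), m i j) := by
  have h := IsLead.prod (ω := idxWeight n) (incPairs n)
    (P := fun p => yDiff p ^ m p.1 p.2) (m := fun p => m p.1 p.2 • Finsupp.single p.2 1)
    (fun p hp => (yDiff_isLead (mem_filter.1 hp).2).pow _)
  rw [← yProd] at h
  convert h using 1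
  ext j
  rw [Finsupp.finsetSum_apply]
  have := sum_incPairs (fun i k => (m i k • Finsupp.single k 1 : Fin n →₀ ℕ) j)
  rw [this, Finset.sum_comm, Finset.sum_eq_single j]
  · simp [Finset.sum_filter]
  · intro k _ hk
    simp [hk]
  · simp

lemma yDiff_degreeOf {n : ℕ} {p : Fin n × Fin n} (hp : p.1 ≠ p.2) (j : Fin n) :
    (if p.1 = j then 1 else 0) + (if p.2 = j then 1 else 0) ≤ (yDiff p).degreeOf j := by
  have hne : (Finsupp.single p.1 1 : Fin n →₀ ℕ) ≠ Finsupp.single p.2 1 := by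
    intro h
    have := DFunLike.congr_fun h p.2
    simp [hp] at this
  have h1 : Finsupp.single p.1 1 ∈ (yDiff p).support := by
    rw [MvPolynomial.mem_support_iff, yDiff, MvPolynomial.coeff_sub, MvPolynomial.coeff_X,
      MvPolynomial.coeff_X, if_neg hne.symm]
    simp
  have h2 : Finsupp.single p.2 1 ∈ (yDiff p).support := by
    rw [MvPolynomial.mem_support_iff, yDiff, MvPolynomial.coeff_sub, MvPolynomial.coeff_X,
      MvPolynomial.coeff_X, if_neg hne]
    simp
  have h3 := MvPolynomial.monomial_le_degreeOf j h1
  have h4 := MvPolynomial.monomial_le_degreeOf j h2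
  rw [Finsupp.single_apply] at h3 h4
  rcases eq_or_ne p.1 j with h | h
  · have : p.2 ≠ j := fun h' => hp (h.trans h'.symm)
    simp only [this, if_false, add_zero]
    exact h3
  · simp only [h, if_false, zero_add]
    exact h4

lemma yProd_degreeOf {n : ℕ} (m : Fin n → Fin n → ℕ) (hm : ∀ i j, m i j = m j i) (j : Fin n) :
    ∑ i ∈ univ.erase j, m i j ≤ (yProd m).degreeOf j := by
  rw [yProd, MvPolynomial.degreeOf_prod_eq]
  swap
  · intro p hp
    exact pow_ne_zero _ (yDiff_irreducible (mem_filter.1 hp).2.ne).ne_zero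
  have h1 : ∀ p ∈ incPairs n, m p.1 p.2 * ((if p.1 = j then 1 else 0) +
      (if p.2 = j then 1 else 0)) ≤ (yDiff p ^ m p.1 p.2).degreeOf j := by
    intro p hp
    rw [MvPolynomial.degreeOf_pow_eq _ _ _ (yDiff_irreducible (mem_filter.1 hp).2.ne).ne_zero]
    exact Nat.mul_le_mul_left _ (yDiff_degreeOf (mem_filter.1 hp).2.ne j)
  refine le_trans (le_of_eq ?_) (Finset.sum_le_sum h1)
  rw [sum_incPairs (fun i k => m i k * ((if i = j then 1 else 0) + (if k = j then 1 else 0)))]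
  have h2 : ∀ i k : Fin n, (if i < k then m i k * ((if i = j then 1 else 0) +
      (if k = j then 1 else 0)) else 0) = (if i = j then (if i < k then m i k else 0) else 0) +
      (if k = j then (if i < k then m i k else 0) else 0) := by
    intro i k
    split_ifs <;> ring
  simp only [h2, Finset.sum_add_distrib, Finset.sum_ite_eq', Finset.mem_univ, if_true]
  rw [Finset.sum_comm]
  simp only [Finset.sum_ite_eq', Finset.mem_univ, if_true]
  rw [← Finset.sum_add_distrib, ← Finset.sum_erase_add _ _ (Finset.mem_univ j)]
  simp only [lt_irrefl, if_false, add_zero]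
  refine Finset.sum_congr rfl fun i hi => ?_
  have hij := Finset.ne_of_mem_erase hi
  rcases lt_or_gt_of_ne hij with h | h
  · simp [h, h.not_gt]
  · simp [h, h.not_gt, hm j i]

lemma yProd_swap {n : ℕ} (m : Fin n → Fin n → ℕ) (hm : ∀ i j, m i j = m j i)
    (τ : Equiv.Perm (Fin n)) (hτ : ∀ k l, m (τ k) (τ l) = m k l) :
    MvPolynomial.rename τ (yProd m) = yProd m ∨ MvPolynomial.rename τ (yProd m) = -yProd m := by
  set Q : MvPolynomial (Fin n) ℂ :=
    ∏ p ∈ univ.filter (fun p : Fin n × Fin n => p.1 ≠ p.2), yDiff p ^ m p.1 p.2 with hQ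
  have h1 : MvPolynomial.rename τ Q = Q := by
    rw [hQ, map_prod]
    refine Finset.prod_bij (fun p _ => (τ p.1, τ p.2)) ?_ ?_ ?_ ?_
    · intro p hp
      simpa using hp
    · rintro ⟨p1, p2⟩ _ ⟨q1, q2⟩ _ h
      simpa using h
    · rintro ⟨q1, q2⟩ hq
      exact ⟨(τ.symm q1, τ.symm q2), by simpa using hq, by simp⟩
    · intro p _
      simp [yDiff, hτ]
  obtain ⟨ε, hε0, hε⟩ : ∃ ε : ℂ, ε ≠ 0 ∧ Q = MvPolynomial.C ε * yProd m ^ 2 := by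
    have h2 : Q = yProd m * ∏ p ∈ incPairs n, yDiff p.swap ^ m p.1 p.2 := by
      have : (univ.filter (fun p : Fin n × Fin n => p.1 ≠ p.2)) =
          (incPairs n).disjUnion (univ.filter fun p : Fin n × Fin n => p.2 < p.1) (by
            rw [Finset.disjoint_left]
            intro p hp hq
            exact lt_asymm (mem_filter.1 hp).2 (mem_filter.1 hq).2) := by
        ext p
        simp [incPairs]
      rw [hQ, this, Finset.prod_disjUnion, yProd]
      congr 1
      refine Finset.prod_bij (fun p _ => p.swap) ?_ ?_ ?_ ?_
      · intro p hp
        simpa [incPairs] using hp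
      · intro p _ q _ h
        exact Prod.swap_injective h
      · intro q hq
        exact ⟨q.swap, by simpa [incPairs] using hq, by simp⟩
      · intro p _
        simp [hm p.2 p.1]
    refine ⟨∏ p ∈ incPairs n, (-1) ^ m p.1 p.2, ?_, ?_⟩
    · rw [Finset.prod_ne_zero_iff]
      intro p _
      exact pow_ne_zero _ (by norm_num)
    · rw [h2, map_prod, sq]
      have : ∀ p : Fin n × Fin n, yDiff p.swap ^ m p.1 p.2 =
          MvPolynomial.C ((-1) ^ m p.1 p.2) * yDiff p ^ m p.1 p.2 := by
        intro p
        rw [map_pow, ← mul_pow]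
        congr 1
        simp [yDiff]
      rw [Finset.prod_congr rfl (fun p _ => this p), Finset.prod_mul_distrib, ← yProd]
      ring
  rw [hε, map_mul, map_pow, MvPolynomial.rename_C] at h1
  have h3 := mul_left_cancel₀ (by simpa using hε0 :
    (MvPolynomial.C ε : MvPolynomial (Fin n) ℂ) ≠ 0) h1
  exact sq_eq_sq_iff_eq_or_eq_neg.1 h3

/-- A nonzero polynomial divisible by `(y_j - y_i)^{m_{ij}}` for all `i < j` has a monomial
`β + (∑_{i<j} m_{ij})_j`, where `β` leaves room for the full multiplicities below the degree,
and `β` is increasing along indices whose exchange is a symmetry. -/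
lemma exists_exponent {n : ℕ} (g : MvPolynomial (Fin n) ℂ) (hg : g ≠ 0) (m : Fin n → Fin n → ℕ)
    (hm : ∀ i j, m i j = m j i)
    (hdvd : ∀ i j, i < j → (MvPolynomial.X j - MvPolynomial.X i) ^ m i j ∣ g) :
    ∃ β : Fin n → ℕ,
      MvPolynomial.coeff (Finsupp.equivFunOnFinite.symm
        fun j => (∑ i ∈ univ.filter (· < j), m i j) + β j) g ≠ 0 ∧
      (∀ j, (∑ i ∈ univ.erase j, m i j) + β j ≤ g.degreeOf j) ∧
      ∀ i j, i < j → (MvPolynomial.rename (Equiv.swap i j) g = g ∨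
          MvPolynomial.rename (Equiv.swap i j) g = -g) →
        (∀ k l, m (Equiv.swap i j k) (Equiv.swap i j l) = m k l) → β i ≤ β j := by
  have hP : yProd m ∣ g := by
    refine Finset.prod_dvd_of_isRelPrime ?_ ?_
    · intro p hp q hq hpq
      exact (yDiff_isRelPrime (mem_filter.1 hp).2 (mem_filter.1 hq).2 hpq).pow
    · intro p hp
      exact hdvd _ _ (mem_filter.1 hp).2
  obtain ⟨h, rfl⟩ := hP
  have hh : h ≠ 0 := right_ne_zero_of_mul hg
  obtain ⟨β, hβ, hmax⟩ := Finset.exists_max_image h.support (idxWeight n)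
    (MvPolynomial.support_nonempty.2 hh)
  refine ⟨β, ?_, ?_, ?_⟩
  · have := (yProd_isLead m).coeff_mul hmax
    have h2 : (Finsupp.equivFunOnFinite.symm
        fun j => (∑ i ∈ univ.filter (· < j), m i j) + β j) =
        (Finsupp.equivFunOnFinite.symm fun j => ∑ i ∈ univ.filter (· < j), m i j) + β := by
      ext j; rfl
    rw [h2, this]
    exact mul_ne_zero (yProd_isLead m).1 (MvPolynomial.mem_support_iff.1 hβ)
  · intro j
    rw [MvPolynomial.degreeOf_mul_eq (yProd_ne_zero m) hh]
    exact add_le_add (yProd_degreeOf m hm j) (MvPolynomial.monomial_le_degreeOf j hβ)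
  · intro i j hij hsym hmτ
    have h1 := yProd_swap m hm (Equiv.swap i j) hmτ
    have h2 : MvPolynomial.rename (Equiv.swap i j) h = h ∨
        MvPolynomial.rename (Equiv.swap i j) h = -h := by
      have h0 := yProd_ne_zero m
      rw [map_mul] at hsym
      rcases h1 with h1 | h1 <;> rw [h1] at hsym <;> rcases hsym with h2 | h2
      · exact Or.inl (mul_left_cancel₀ h0 h2)
      · exact Or.inr (mul_left_cancel₀ h0 (by rw [h2]; ring))
      · exact Or.inr (mul_left_cancel₀ h0 (by rw [mul_neg, ← h2]; ring))
      · exact Or.inl (mul_left_cancel₀ h0 (by linear_combination -h2))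
    have h3 := MvPolynomial.coeff_rename_mapDomain (Equiv.swap i j) (Equiv.injective _) h β
    have h4 : β.mapDomain (Equiv.swap i j) ∈ h.support := by
      rw [MvPolynomial.mem_support_iff] at hβ ⊢
      rcases h2 with h2 | h2 <;> rw [h2] at h3
      · rwa [h3]
      · rw [MvPolynomial.coeff_neg] at h3
        intro h5
        rw [h5, neg_zero] at h3
        exact hβ h3.symm
    have h5 := hmax _ h4
    by_contra hlt
    push Not at hlt
    have hw : ∀ b : Fin n →₀ ℕ, ((idxWeight n b : ℕ) : ℤ) = ∑ k, (b k : ℤ) * (k : ℕ) := by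
      intro b
      rw [idxWeight, Finsupp.weight_apply, Finsupp.sum_fintype _ _ (by simp)]
      simp
    have h6 : ((idxWeight n (β.mapDomain (Equiv.swap i j)) : ℕ) : ℤ) =
        ∑ k, (β k : ℤ) * (Equiv.swap i j k : Fin n) := by
      rw [hw, ← Equiv.sum_comp (Equiv.swap i j)]
      refine Finset.sum_congr rfl fun k _ => ?_
      rw [Finsupp.mapDomain_apply (Equiv.injective _)]
    have h7 : (∑ k, (β k : ℤ) * (Equiv.swap i j k : Fin n)) - ∑ k, (β k : ℤ) * (k : ℕ) =
        (β i : ℤ) * (j - i) + (β j : ℤ) * (i - j) := by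
      rw [← Finset.sum_sub_distrib, Fintype.sum_eq_add i j hij.ne]
      · rw [Equiv.swap_apply_left, Equiv.swap_apply_right]; ring
      · rintro k ⟨hki, hkj⟩
        rw [Equiv.swap_apply_of_ne_of_ne hki hkj]; ring
    have h8 : ((idxWeight n (β.mapDomain (Equiv.swap i j)) : ℕ) : ℤ) ≤ (idxWeight n β : ℕ) := by
      exact_mod_cast h5
    rw [h6, hw] at h8
    have h9 : (0 : ℤ) < ((β i : ℤ) - β j) * (((j : ℕ) : ℤ) - (i : ℕ)) := by
      apply mul_pos
      · have : (β j : ℤ) < β i := by exact_mod_cast hlt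
        linarith
      · have : ((i : ℕ) : ℤ) < (j : ℕ) := by exact_mod_cast hij
        linarith
    nlinarith

/-! ### Monomials over an extremal `x`-exponent -/

lemma rename_swap_ySlice {n r : ℕ} {f : PolyRing n} (hf : f ∈ Ar n r) (a : Fin n → ℕ)
    (Z : Finset (Fin n)) (top : Fin n → ℕ) {i j : Fin n} (hi : i ∉ Z) (hj : j ∉ Z)
    (haij : a i = a j) :
    MvPolynomial.rename (Equiv.swap i j) (ySlice a Z top f) = ySlice a Z top f ∨
      MvPolynomial.rename (Equiv.swap i j) (ySlice a Z top f) = -ySlice a Z top f := by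
  set τ := Equiv.swap i j with hτ
  have haτ : a ∘ τ = a := by
    funext k
    rcases eq_or_ne k i with rfl | hki
    · simp [hτ, haij]
    · rcases eq_or_ne k j with rfl | hkj
      · simp [hτ, haij]
      · simp [hτ, Equiv.swap_apply_of_ne_of_ne hki hkj]
  have hZ : ∀ z ∈ Z, τ z = z := by
    intro z hz
    exact Equiv.swap_apply_of_ne_of_ne (fun h => hi (h ▸ hz)) (fun h => hj (h ▸ hz))
  set c : ℂ := ((Equiv.Perm.sign τ : ℤ) : ℂ) ^ r with hc
  have key : MvPolynomial.rename τ (ySlice a Z top f) = MvPolynomial.C c * ySlice a Z top f := by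
    ext b
    have hb : b = (b.mapDomain τ.symm).mapDomain τ := by
      rw [← Finsupp.mapDomain_comp]; simp
    have hb2 : ⇑(b.mapDomain τ.symm) = b ∘ τ := by
      funext k
      simp
    conv_lhs => rw [hb]
    rw [MvPolynomial.coeff_rename_mapDomain _ τ.injective, MvPolynomial.coeff_C_mul, coeff_ySlice,
      coeff_ySlice, hb2]
    have h1 : (∀ z ∈ Z, (b ∘ τ) z = top z) ↔ ∀ z ∈ Z, b z = top z := by
      refine forall₂_congr fun z hz => ?_
      simp [hZ z hz]
    simp only [h1]
    split_ifs
    · have := Ar_coeff_perm_eq hf τ a b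
      rwa [haτ] at this
    · simp
  have hc1 : c = 1 ∨ c = -1 := by
    rw [hc]
    rcases Int.units_eq_one_or (Equiv.Perm.sign τ) with h | h
    · left; simp [h]
    · rw [h]
      simpa using neg_one_pow_eq_or ℂ r
  rw [key]
  rcases hc1 with h | h <;> rw [h] <;> simp

/-- The multiplicity `max (r - |a_i - a_j|) 0`, replaced by `0` if `i` or `j` lies in `Z`. -/
def multOff {n : ℕ} (r : ℕ) (a : Fin n → ℕ) (Z : Finset (Fin n)) (i j : Fin n) : ℕ :=
  if i ∈ Z ∨ j ∈ Z then 0 else r - (max (a i) (a j) - min (a i) (a j))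

lemma between_of_sq_le {u w A B : ℕ} (h1 : u + w = A + B) (h2 : u ^ 2 + w ^ 2 ≤ A ^ 2 + B ^ 2) :
    min A B ≤ u ∧ u ≤ max A B := by
  have h3 : ((u : ℤ) - A) * (u - B) ≤ 0 := by
    have h1' : (w : ℤ) = A + B - u := by omega
    have h2' : (u : ℤ) ^ 2 + w ^ 2 ≤ A ^ 2 + B ^ 2 := by exact_mod_cast h2
    rw [h1'] at h2'
    nlinarith
  by_contra h
  rw [not_and_or, not_le, not_le] at h
  rcases h with h | h
  · have : (0 : ℤ) < (A - u) * (B - u) := mul_pos (by omega) (by omega)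
    nlinarith
  · have : (0 : ℤ) < (u - A) * (u - B) := mul_pos (by omega) (by omega)
    nlinarith

/-- An `x`-exponent `a` of maximal norm in the support of `f ∈ A^r` (among the monomials with
prescribed degrees in the pairs indexed by `Z`) carries a monomial of `f` whose `y`-exponents
satisfy the inequalities defining increasing tuples. -/
lemma exists_monomial {n r : ℕ} {f : PolyRing n} (hf : f ∈ Ar n r) (a : Fin n → ℕ)
    (Z : Finset (Fin n)) (top : Fin n → ℕ)
    (hmax : ∀ μ ∈ f.support, (∀ z ∈ Z, μ (Sum.inl z) = a z ∧ μ (Sum.inr z) = top z) →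
      ∑ k, μ (Sum.inl k) ^ 2 ≤ ∑ k, a k ^ 2)
    (hne : ∃ b, MvPolynomial.coeff (xyExp a b) f ≠ 0 ∧ ∀ z ∈ Z, b z = top z)
    (e : Fin n → ℕ)
    (he : ∀ b, MvPolynomial.coeff (xyExp a b) f ≠ 0 → (∀ z ∈ Z, b z = top z) → ∀ j, b j ≤ e j) :
    ∃ b β : Fin n → ℕ, (∀ j, b j = (∑ i ∈ univ.filter (· < j), multOff r a Z i j) + β j) ∧
      MvPolynomial.coeff (xyExp a b) f ≠ 0 ∧ (∀ z ∈ Z, b z = top z) ∧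
      (∀ j, (∑ i ∈ univ.erase j, multOff r a Z i j) + β j ≤ e j) ∧
      ∀ i j, i < j → a i = a j → i ∉ Z → j ∉ Z → β i ≤ β j := by
  have hg : ySlice a Z top f ≠ 0 := by
    obtain ⟨b, hb, hbZ⟩ := hne
    intro h0
    have := congrArg (MvPolynomial.coeff (Finsupp.equivFunOnFinite.symm b)) h0
    rw [coeff_ySlice, if_pos (by simpa using hbZ)] at this
    exact hb (by simpa using this)
  obtain ⟨β, hβ, hdeg, hsym⟩ := exists_exponent (ySlice a Z top f) hg (multOff r a Z)
    (by intro i j; simp only [multOff, or_comm, max_comm, min_comm])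
    (by
      intro i j hij
      unfold multOff
      split_ifs with h
      · simp
      · push Not at h
        rw [max_comm, min_comm]
        refine pow_dvd_ySlice hij.ne' (Ar_le_diagIdeal_pow hf hij.ne') a Z top h.2 h.1 ?_
        intro μ hμ hz hoff hsum
        have h1 := hmax μ hμ (fun z hzZ => ⟨hoff z (fun h' => h.2 (h' ▸ hzZ))
          (fun h' => h.1 (h' ▸ hzZ)), hz z hzZ⟩)
        have h2 : ∀ v : Fin n → ℕ, ∑ k, v k ^ 2 =
            v j ^ 2 + v i ^ 2 + ∑ k ∈ (univ.erase j).erase i, v k ^ 2 := by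
          intro v
          rw [← Finset.add_sum_erase univ _ (mem_univ j),
            ← Finset.add_sum_erase (univ.erase j) _ (mem_erase.2 ⟨hij.ne, mem_univ i⟩), add_assoc]
        rw [h2, h2] at h1
        have h3 : ∑ k ∈ (univ.erase j).erase i, μ (Sum.inl k) ^ 2 =
            ∑ k ∈ (univ.erase j).erase i, a k ^ 2 := by
          refine Finset.sum_congr rfl fun k hk => ?_
          rw [hoff k (ne_of_mem_erase (mem_of_mem_erase hk)) (ne_of_mem_erase hk)]
        rw [h3] at h1
        exact between_of_sq_le hsum (by omega))
  rw [coeff_ySlice] at hβ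
  have hZ := (ite_ne_right_iff.1 hβ).1
  rw [if_pos hZ] at hβ
  refine ⟨_, β, fun j => rfl, hβ, hZ, ?_, ?_⟩
  · intro j
    refine (hdeg j).trans ?_
    rw [MvPolynomial.degreeOf_le_iff]
    intro b hb
    rw [MvPolynomial.mem_support_iff, coeff_ySlice] at hb
    have hbZ := (ite_ne_right_iff.1 hb).1
    rw [if_pos hbZ] at hb
    exact he b hb hbZ j
  · intro i j hij haij hi hj
    refine hsym i j hij (rename_swap_ySlice hf a Z top hi hj haij) ?_
    intro k l
    have h1 : ∀ k, a (Equiv.swap i j k) = a k := by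
      intro k
      rw [Equiv.swap_apply_def]; split_ifs with h h' <;> simp [*]
    have h2 : ∀ k, Equiv.swap i j k ∈ Z ↔ k ∈ Z := by
      intro k
      rw [Equiv.swap_apply_def]; split_ifs with h h' <;> simp [*]
    simp only [multOff, h1, h2]

/-! ### Increasing tuples and the upper bound -/

/-- `∑_{i<j} max (r - (a_j - a_i)) 0`. -/
def lowSum {n : ℕ} (r : ℤ) (a : Fin n → ℤ) (j : Fin n) : ℤ :=
  ∑ i ∈ univ.filter (fun i => i < j), max (r - (a j - a i)) 0

/-- `∑_{k>j} max (r - (a_k - a_j)) 0`. -/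
def highSum {n : ℕ} (r : ℤ) (a : Fin n → ℤ) (j : Fin n) : ℤ :=
  ∑ k ∈ univ.filter (fun k => j < k), max (r - (a k - a j)) 0

lemma lowSum_nonneg {n : ℕ} (r : ℤ) (a : Fin n → ℤ) (j : Fin n) : 0 ≤ lowSum r a j :=
  Finset.sum_nonneg fun _ _ => le_max_right _ _

lemma highSum_nonneg {n : ℕ} (r : ℤ) (a : Fin n → ℤ) (j : Fin n) : 0 ≤ highSum r a j :=
  Finset.sum_nonneg fun _ _ => le_max_right _ _

lemma lowSum_succ {n : ℕ} {r : ℤ} (hr : 0 ≤ r) (a : Fin n → ℤ) (i : Fin n)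
    (h : (i : ℕ) + 1 < n) (ha : a i = a ⟨(i : ℕ) + 1, h⟩) :
    lowSum r a ⟨(i : ℕ) + 1, h⟩ = lowSum r a i + r := by
  have h1 : univ.filter (fun k : Fin n => k < ⟨(i : ℕ) + 1, h⟩) =
      insert i (univ.filter fun k : Fin n => k < i) := by
    ext k
    simp only [mem_filter, mem_univ, true_and, mem_insert, Fin.lt_def, Fin.ext_iff]
    omega
  rw [lowSum, h1, Finset.sum_insert (by simp), ← ha, lowSum]
  simp [max_eq_left hr, add_comm]

/-- Increasing tuples in terms of the excess `b_j - ∑_{i<j} max (r - (a_j - a_i)) 0`. -/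
lemma rlex_iff {n : ℕ} {s d1 N r : ℤ} (hr : 0 ≤ r) (a b : Fin n → ℤ) :
    RLexIncIn n s d1 N r a b ↔ Monotone a ∧ (∀ j, 0 ≤ a j ∧ a j ≤ d1) ∧
      (∀ j, lowSum r a j ≤ b j ∧ b j ≤ N + s * a j - highSum r a j) ∧
      ∀ i j, i < j → a i = a j → b i - lowSum r a i ≤ b j - lowSum r a j := by
  constructor
  · rintro ⟨hm, h1, h2, h3, h4⟩
    refine ⟨hm, ?_, h4, ?_⟩
    · intro j
      have hn : 0 < n := j.pos
      exact ⟨(h2 hn).trans (hm (Fin.mk_le_of_le_val (Nat.zero_le _))),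
        (hm (Fin.le_def.2 (by simp only; omega))).trans (h3 hn)⟩
    · have key : ∀ d : ℕ, ∀ i j : Fin n, (j : ℕ) = i + d → a i = a j →
          b i - lowSum r a i ≤ b j - lowSum r a j := by
        intro d
        induction d with
        | zero =>
          intro i j hij _
          have : i = j := Fin.ext (by omega)
          rw [this]
        | succ d ih =>
          intro i j hij ha
          have hi : (i : ℕ) + d + 1 < n := by omega
          have hj : j = ⟨(i : ℕ) + d + 1, hi⟩ := Fin.ext (by simp only; omega)
          have hi' : (i : ℕ) + d < n := by omega
          have e1 : a i ≤ a ⟨(i : ℕ) + d, hi'⟩ := hm (Fin.le_def.2 (by simp))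
          have e2 : a ⟨(i : ℕ) + d, hi'⟩ ≤ a j := hm (Fin.le_def.2 (by simp only; omega))
          have e3 : a ⟨(i : ℕ) + d, hi'⟩ = a ⟨(i : ℕ) + d + 1, hi⟩ := by
            rw [← hj]; omega
          have h5 := ih i ⟨(i : ℕ) + d, hi'⟩ rfl (by omega)
          have h6 := h1 ⟨(i : ℕ) + d, hi'⟩ hi e3
          have h7 := lowSum_succ hr a ⟨(i : ℕ) + d, hi'⟩ hi e3
          rw [hj]
          simp only at h6 h7
          linarith
      intro i j hij ha
      exact key (j - i) i j (by have := Fin.lt_def.1 hij; omega) ha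
  · rintro ⟨hm, h1, h2, h3⟩
    refine ⟨hm, ?_, fun h => (h1 _).1, fun h => (h1 _).2, h2⟩
    intro i h ha
    have h4 := h3 i ⟨(i : ℕ) + 1, h⟩ (Fin.lt_def.2 (by simp)) ha
    rw [lowSum_succ hr a i h ha] at h4
    linarith

lemma multOff_cast {n r : ℕ} {a : Fin n → ℕ} (ha : Monotone a) {Z : Finset (Fin n)} {i j : Fin n}
    (hij : i ≤ j) (hi : i ∉ Z) (hj : j ∉ Z) :
    (multOff r a Z i j : ℤ) = max ((r : ℤ) - ((a j : ℤ) - a i)) 0 := by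
  have h := ha hij
  simp only [multOff, hi, hj, or_self, if_false]
  omega

lemma sum_erase_split {n : ℕ} (F : Fin n → ℕ) (j : Fin n) :
    ∑ i ∈ univ.erase j, F i =
      ∑ i ∈ univ.filter (fun i => i < j), F i + ∑ k ∈ univ.filter (fun k => j < k), F k := by
  rw [← Finset.sum_union]
  · congr 1
    ext k
    simp [lt_or_lt_iff_ne]
  · rw [Finset.disjoint_left]
    intro k h1 h2
    exact lt_asymm (mem_filter.1 h1).2 (mem_filter.1 h2).2

/-- Integer-valued version of a tuple of natural numbers. -/
def toInt {n : ℕ} (a : Fin n → ℕ) : Fin n → ℤ := fun j => (a j : ℤ)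

lemma sum_multOff_low {n r : ℕ} {a : Fin n → ℕ} (ha : Monotone a) (j : Fin n) :
    ((∑ i ∈ univ.filter (fun i => i < j), multOff r a ∅ i j : ℕ) : ℤ) = lowSum r (toInt a) j := by
  rw [lowSum, Nat.cast_sum]
  refine Finset.sum_congr rfl fun i hi => ?_
  exact multOff_cast ha (mem_filter.1 hi).2.le (by simp) (by simp)

lemma multOff_comm {n : ℕ} (r : ℕ) (a : Fin n → ℕ) (Z : Finset (Fin n)) (i j : Fin n) :
    multOff r a Z i j = multOff r a Z j i := by
  simp only [multOff, or_comm, max_comm, min_comm]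

lemma sum_multOff_high {n r : ℕ} {a : Fin n → ℕ} (ha : Monotone a) (j : Fin n) :
    ((∑ i ∈ univ.filter (fun i => j < i), multOff r a ∅ i j : ℕ) : ℤ) =
      highSum r (toInt a) j := by
  rw [highSum, Nat.cast_sum]
  refine Finset.sum_congr rfl fun i hi => ?_
  rw [multOff_comm]
  exact multOff_cast ha (mem_filter.1 hi).2.le (by simp) (by simp)

/-- Every nonzero section has a nonzero coefficient at an increasing tuple. -/
lemma exists_rlex_coeff {n r : ℕ} {s d1 N : ℤ} {f : PolyRing n} (hf : f ∈ Ar n r)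
    (hS : f ∈ SuppInPoly n s d1 N) (hf0 : f ≠ 0) :
    ∃ a b : Fin n → ℕ, RLexIncIn n s d1 N r (toInt a) (toInt b) ∧
      MvPolynomial.coeff (xyExp a b) f ≠ 0 := by
  obtain ⟨μ, hμ, hmax⟩ := Finset.exists_max_image f.support
    (fun μ => ∑ k, μ (Sum.inl k) ^ 2) (MvPolynomial.support_nonempty.2 hf0)
  set σ := Tuple.sort (fun k => μ (Sum.inl k)) with hσ
  set a : Fin n → ℕ := (fun k => μ (Sum.inl k)) ∘ σ with ha
  have ham : Monotone a := Tuple.monotone_sort _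
  set b₀ : Fin n → ℕ := (fun k => μ (Sum.inr k)) ∘ σ with hb₀
  have hc : MvPolynomial.coeff (xyExp a b₀) f ≠ 0 := by
    rw [Ne, ha, hb₀, Ar_coeff_perm hf, xyExp_eta]
    exact MvPolynomial.mem_support_iff.1 hμ
  have hsum : ∑ k, a k ^ 2 = ∑ k, μ (Sum.inl k) ^ 2 :=
    Equiv.sum_comp σ (fun k => μ (Sum.inl k) ^ 2)
  have hS' : ∀ b, MvPolynomial.coeff (xyExp a b) f ≠ 0 → ∀ j, (a j : ℤ) ≤ d1 ∧
      (b j : ℤ) ≤ N + s * a j := by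
    intro b hb j
    exact hS _ (MvPolynomial.mem_support_iff.2 hb) j
  obtain ⟨b, β, hb, hbc, -, hdeg, hmono⟩ := exists_monomial hf a ∅ 0
    (fun ν hν _ => (hmax ν hν).trans hsum.ge) ⟨b₀, hc, by simp⟩
    (fun j => (N + s * a j).toNat)
    (fun b' hb' _ j => by
      have := (hS' b' hb' j).2
      omega)
  refine ⟨a, b, ?_, hbc⟩
  rw [rlex_iff (by positivity)]
  have hb' : ∀ j, (b j : ℤ) = lowSum r (toInt a) j + β j := by
    intro j
    rw [hb j, ← sum_multOff_low ham]
    push_cast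
    rfl
  refine ⟨fun i j hij => by simpa [toInt] using ham hij,
    fun j => ⟨by simp [toInt], (hS' b hbc j).1⟩, ?_, ?_⟩
  · intro j
    refine ⟨by simp only [toInt] at hb' ⊢; rw [hb']; simp, ?_⟩
    have h1 := hdeg j
    rw [sum_erase_split] at h1
    have h2 := (hS' b₀ hc j).2
    have h3 := sum_multOff_low (r := r) ham j
    have h4 := sum_multOff_high (r := r) ham j
    have h5 := hb' j
    simp only [toInt] at *
    omega
  · intro i j hij haij
    have h1 := hmono i j hij (by simpa [toInt] using haij) (by simp) (by simp)
    have h2 := hb' i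
    have h3 := hb' j
    simp only [toInt] at *
    omega

/-! ### Distance to the upper edge -/

lemma sum_sq_split {n : ℕ} {i j : Fin n} (hij : i ≠ j) (v : Fin n → ℕ) :
    ∑ k, v k ^ 2 = v i ^ 2 + v j ^ 2 + ∑ k ∈ (univ.erase i).erase j, v k ^ 2 := by
  rw [← Finset.add_sum_erase univ _ (mem_univ i),
    ← Finset.add_sum_erase (univ.erase i) _ (mem_erase.2 ⟨hij.symm, mem_univ j⟩), add_assoc]

/-- Among the pairs (monomial, index) on the upper edge of the trapezoid, let `(ν₀, j₀)` be one
with maximal sum of the squared `x`-exponents and then with `x_{j₀}`-exponent `p` minimal.  Then all other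
points of `ν₀` stay away from the upper edge by the expected multiplicity, and by one more if they
lie to the left of `p`. -/
lemma deficit_bound {n r : ℕ} {s d1 N : ℤ} {f : PolyRing n} (hf : f ∈ Ar n r)
    (hS : f ∈ SuppInPoly n s d1 N) (Q p : ℕ)
    (hQ : ∀ ν ∈ f.support, ∀ k, (ν (Sum.inr k) : ℤ) = N + s * ν (Sum.inl k) →
      ∑ l, ν (Sum.inl l) ^ 2 ≤ Q)
    (hp : ∀ ν ∈ f.support, ∀ k, (ν (Sum.inr k) : ℤ) = N + s * ν (Sum.inl k) →
      ∑ l, ν (Sum.inl l) ^ 2 = Q → p ≤ ν (Sum.inl k))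
    (ν₀ : Fin n ⊕ Fin n →₀ ℕ) (hν₀ : ν₀ ∈ f.support) (j₀ : Fin n)
    (ht : (ν₀ (Sum.inr j₀) : ℤ) = N + s * ν₀ (Sum.inl j₀))
    (hQ0 : ∑ l, ν₀ (Sum.inl l) ^ 2 = Q) (hp0 : ν₀ (Sum.inl j₀) = p)
    (i : Fin n) (hi : i ≠ j₀) :
    (ν₀ (Sum.inr i) : ℤ) + max ((r : ℤ) - |(ν₀ (Sum.inl i) : ℤ) - p|) 0 +
      (if ν₀ (Sum.inl i) < p then 1 else 0) ≤ N + s * ν₀ (Sum.inl i) := by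
  have hSi := (hS ν₀ hν₀ i).2
  obtain ⟨w, hw⟩ : ∃ w : ℕ, (w : ℤ) = N + s * ν₀ (Sum.inl i) - ν₀ (Sum.inr i) :=
    ⟨(N + s * ν₀ (Sum.inl i) - ν₀ (Sum.inr i)).toNat, by omega⟩
  set A := ν₀ (Sum.inl i) with hA
  by_contra hcon
  -- the separating functions: values `t` of the `x_i`-exponent, values `< w` of the deficit
  set T : Finset ℕ := if A < p then Finset.Ioo A p else Finset.Ico p A with hT
  set L : List ((Fin n ⊕ Fin n →₀ ℕ) → ℂ) :=
    T.toList.map (fun (t : ℕ) μ => (μ (Sum.inl i) : ℂ) - t) ++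
    (List.range w).map (fun (t : ℕ) μ => (N : ℂ) + s * μ (Sum.inl i) - μ (Sum.inr i) - t) with hL
  refine MvPolynomial.mem_support_iff.1 hν₀ ?_
  have hw0 : A < p → w ≠ 0 := by
    intro hlt h0
    have h1 := hp ν₀ hν₀ i (by rw [h0] at hw; push_cast at hw; rw [← hA]; linarith) hQ0
    omega
  have hlen : L.length < r := by
    rw [hL, List.length_append, List.length_map, List.length_map, Finset.length_toList,
      List.length_range, hT]
    split_ifs at hcon ⊢ with hlt
    · have := hw0 hlt
      rw [Nat.card_Ioo]
      rw [abs_of_neg (by omega)] at hcon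
      omega
    · rw [Nat.card_Ico]
      rw [abs_of_nonneg (by omega)] at hcon
      omega
  refine coeff_eq_zero_of_separated hi (Ar_le_diagIdeal_pow hf hi) L ?_ hlen ν₀ ?_ ?_
  · intro φ hφ
    rw [hL, List.mem_append, List.mem_map, List.mem_map] at hφ
    rcases hφ with ⟨t, _, rfl⟩ | ⟨t, _, rfl⟩
    · exact ⟨1, 0, -t, fun μ => by ring⟩
    · exact ⟨s, -1, N - t, fun μ => by ring⟩
  · intro φ hφ
    rw [hL, List.mem_append, List.mem_map, List.mem_map] at hφ
    rcases hφ with ⟨t, ht1, rfl⟩ | ⟨t, ht1, rfl⟩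
    · intro h0
      have h1 : A = t := by exact_mod_cast sub_eq_zero.1 h0
      rw [Finset.mem_toList, hT] at ht1
      split_ifs at ht1 with hlt
      · rw [mem_Ioo] at ht1; omega
      · rw [mem_Ico] at ht1; omega
    · intro h0
      have h1 : (N + s * (A : ℤ) - ν₀ (Sum.inr i) : ℤ) = t := by
        exact_mod_cast sub_eq_zero.1 h0
      rw [List.mem_range] at ht1
      omega
  · intro μ hμ hoff hx hy hne
    have hSμi := (hS μ hμ i).2
    have hSμj := (hS μ hμ j₀).2
    have e1 : (μ (Sum.inl i) : ℤ) = A + p - μ (Sum.inl j₀) := by omega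
    have e2 : s * (μ (Sum.inl i) : ℤ) = s * A + s * p - s * μ (Sum.inl j₀) := by rw [e1]; ring
    rw [hp0] at ht
    by_cases hδ : N + s * (μ (Sum.inl i) : ℤ) - μ (Sum.inr i) < w
    · obtain ⟨t, ht1⟩ : ∃ t : ℕ, (t : ℤ) = N + s * (μ (Sum.inl i) : ℤ) - μ (Sum.inr i) :=
        ⟨(N + s * (μ (Sum.inl i) : ℤ) - μ (Sum.inr i)).toNat, by omega⟩
      refine ⟨fun μ => (N : ℂ) + s * μ (Sum.inl i) - μ (Sum.inr i) - t, ?_, ?_⟩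
      · rw [hL, List.mem_append, List.mem_map, List.mem_map]
        exact Or.inr ⟨t, by rw [List.mem_range]; omega, rfl⟩
      · have : (N : ℂ) + s * (μ (Sum.inl i) : ℕ) - (μ (Sum.inr i) : ℕ) = t := by
          exact_mod_cast ht1.symm
        exact sub_eq_zero.2 this
    · -- the deficit of `j₀` vanishes, so the extremality of `(ν₀, j₀)` applies to `(μ, j₀)`
      have htμ : (μ (Sum.inr j₀) : ℤ) = N + s * μ (Sum.inl j₀) := by omega
      have hyi : μ (Sum.inr i) + s * A = ν₀ (Sum.inr i) + s * μ (Sum.inl i) := by omega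
      have hQμ := hQ μ hμ j₀ htμ
      have hrest : ∑ k ∈ (univ.erase i).erase j₀, μ (Sum.inl k) ^ 2 =
          ∑ k ∈ (univ.erase i).erase j₀, ν₀ (Sum.inl k) ^ 2 := by
        refine Finset.sum_congr rfl fun k hk => ?_
        rw [(hoff k (ne_of_mem_erase (mem_of_mem_erase hk)) (ne_of_mem_erase hk)).1]
      have s1 := sum_sq_split hi (fun k => μ (Sum.inl k))
      have s2 := sum_sq_split hi (fun k => ν₀ (Sum.inl k))
      have hbt := between_of_sq_le hx (by omega)
      rw [hp0] at hbt
      have hneA : μ (Sum.inl i) ≠ A := by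
        intro hu
        apply hne
        ext (k | k)
        · rcases eq_or_ne k i with rfl | hki
          · exact hu
          · rcases eq_or_ne k j₀ with rfl | hkj
            · omega
            · exact (hoff k hki hkj).1
        · rw [hu] at hyi
          rcases eq_or_ne k i with rfl | hki
          · omega
          · rcases eq_or_ne k j₀ with rfl | hkj
            · omega
            · exact (hoff k hki hkj).2
      have hnep : A < p → μ (Sum.inl i) ≠ p := by
        intro hlt hu
        have hv : μ (Sum.inl j₀) = A := by omega
        have := hp μ hμ j₀ htμ (by
          rw [s1, hrest, hu, hv]
          rw [← hA, hp0] at s2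
          omega)
        omega
      refine ⟨fun ν => (ν (Sum.inl i) : ℂ) - (μ (Sum.inl i) : ℕ), ?_, sub_self _⟩
      rw [hL, List.mem_append, List.mem_map, List.mem_map]
      refine Or.inl ⟨μ (Sum.inl i), ?_, rfl⟩
      rw [Finset.mem_toList, hT]
      split_ifs with hlt
      · have := hnep hlt
        rw [mem_Ioo]; omega
      · rw [mem_Ico]; omega

/-! ### Monomials touching the upper edge -/

/-- `j₀` is the distinguished index of the tuple `(a, b)`: the upper bound is attained at `j₀`, is
strict to the left of `a_{j₀}`, and `j₀` is the last index of its column. -/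
def IsTopIndex {n : ℕ} (s N r : ℤ) (a b : Fin n → ℤ) (j₀ : Fin n) : Prop :=
  b j₀ = N + s * a j₀ - highSum r a j₀ ∧
    (∀ j, a j < a j₀ → b j < N + s * a j - highSum r a j) ∧ ∀ j, j₀ < j → a j₀ < a j

lemma IsTopIndex.unique {n : ℕ} {s N r : ℤ} {a b : Fin n → ℤ} {j₀ j₁ : Fin n}
    (h0 : IsTopIndex s N r a b j₀) (h1 : IsTopIndex s N r a b j₁) : j₀ = j₁ := by
  have e1 : ¬ a j₀ < a j₁ := fun h => (h1.2.1 _ h).ne h0.1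
  have e2 : ¬ a j₁ < a j₀ := fun h => (h0.2.1 _ h).ne h1.1
  rcases lt_trichotomy j₀ j₁ with h | h | h
  · exact absurd (h0.2.2 _ h) e1
  · exact h
  · exact absurd (h1.2.2 _ h) e2

/-- The `y`-exponents of the monomial detecting the tuple `(a, b)` with distinguished index `j₀`:
the point at `j₀` is moved up to the upper edge and the points after it are moved down. -/
def topExp {n : ℕ} (s N r : ℤ) (a b : Fin n → ℤ) (j₀ j : Fin n) : ℤ :=
  if j = j₀ then N + s * a j₀ else b j - if j₀ < j then max (r - (a j - a j₀)) 0 else 0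

lemma sum_topExp {n : ℕ} {s N r : ℤ} {a b : Fin n → ℤ} {j₀ : Fin n} (h : IsTopIndex s N r a b j₀) :
    ∑ j, topExp s N r a b j₀ j = ∑ j, b j := by
  have e : ∀ j, topExp s N r a b j₀ j = b j + (if j = j₀ then highSum r a j₀ else 0) -
      if j₀ < j then max (r - (a j - a j₀)) 0 else 0 := by
    intro j
    unfold topExp
    split_ifs with h1 h2 h2
    · exact absurd h2 (by rw [h1]; exact lt_irrefl _)
    · rw [h1, h.1]; ring
    · ring
    · ring
  simp only [e, Finset.sum_sub_distrib, Finset.sum_add_distrib, Finset.sum_ite_eq',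
    Finset.mem_univ, if_true]
  rw [← Finset.sum_filter, highSum]
  ring

lemma sum_multOff_singleton {n r : ℕ} (a : Fin n → ℕ) (S : Finset (Fin n)) {j j₀ : Fin n}
    (hj : j ≠ j₀) : ∑ i ∈ S, multOff r a ∅ i j =
      ∑ i ∈ S, multOff r a {j₀} i j + if j₀ ∈ S then multOff r a ∅ j₀ j else 0 := by
  rw [← Finset.sum_ite_eq' S j₀ (fun i => multOff r a ∅ i j), ← Finset.sum_add_distrib]
  refine Finset.sum_congr rfl fun i _ => ?_
  unfold multOff
  by_cases h : i = j₀ <;> simp [h, hj]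

lemma multOff_abs {n r : ℕ} (a : Fin n → ℕ) (i j : Fin n) :
    (multOff r a ∅ i j : ℤ) = max ((r : ℤ) - |(a i : ℤ) - a j|) 0 := by
  simp only [multOff, notMem_empty, or_self, if_false]
  rcases le_total (a i) (a j) with h | h
  · rw [abs_of_nonpos (by omega)]; omega
  · rw [abs_of_nonneg (by omega)]; omega

lemma sum_erase_multOff_congr {n r : ℕ} (a : Fin n → ℕ) {i j : Fin n} (h : a i = a j) :
    ∑ k ∈ univ.erase i, multOff r a ∅ k i = ∑ k ∈ univ.erase j, multOff r a ∅ k j := by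
  have e : ∀ i : Fin n, ∑ k ∈ univ.erase i, multOff r a ∅ k i + r = ∑ k, multOff r a ∅ k i := by
    intro i
    rw [← Finset.sum_erase_add univ _ (mem_univ i)]
    simp [multOff]
  have e1 := e i
  have e2 := e j
  have e3 : ∑ k, multOff r a ∅ k i = ∑ k, multOff r a ∅ k j := by
    simp only [multOff, h]; simp
  omega

lemma sum_erase_multOff_le {n r : ℕ} (a : Fin n → ℕ) (i : Fin n) :
    ((∑ k ∈ univ.erase i, multOff r a ∅ k i : ℕ) : ℤ) ≤ r * ((n : ℤ) - 1) := by
  have h1 : ∑ k ∈ univ.erase i, multOff r a ∅ k i ≤ (univ.erase i).card • r := by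
    refine Finset.sum_le_card_nsmul _ _ _ fun k _ => ?_
    simp [multOff]
  rw [card_erase_of_mem (mem_univ i), card_univ, Fintype.card_fin, smul_eq_mul] at h1
  have hn : 1 ≤ n := i.pos
  have h2 : (((n - 1) * r : ℕ) : ℤ) = r * ((n : ℤ) - 1) := by
    push_cast [hn]; ring
  rw [← h2]
  exact_mod_cast h1

/-- A section for the bound `N` which is not a section for `N - 1` has a nonzero coefficient at
the monomial attached to some increasing tuple with a distinguished index. -/
lemma exists_top_coeff {n r : ℕ} {s d1 N : ℤ} (hs : 0 ≤ s) (hN : (r : ℤ) * ((n : ℤ) - 1) ≤ N)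
    {f : PolyRing n} (hf : f ∈ Ar n r) (hS : f ∈ SuppInPoly n s d1 N)
    (hS1 : f ∉ SuppInPoly n s d1 (N - 1)) :
    ∃ (a b' : Fin n → ℕ) (b : Fin n → ℤ) (j₀ : Fin n),
      RLexIncIn n s d1 N r (toInt a) b ∧ IsTopIndex s N r (toInt a) b j₀ ∧
      toInt b' = topExp s N r (toInt a) b j₀ ∧ MvPolynomial.coeff (xyExp a b') f ≠ 0 := by
  classical
  set S := (f.support ×ˢ (univ : Finset (Fin n))).filter
    (fun q => (q.1 (Sum.inr q.2) : ℤ) = N + s * q.1 (Sum.inl q.2)) with hSdef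
  have hSmem : ∀ ν k, (ν, k) ∈ S ↔ ν ∈ f.support ∧
      (ν (Sum.inr k) : ℤ) = N + s * ν (Sum.inl k) := by
    intro ν k; simp [hSdef]
  have hSne : S.Nonempty := by
    have : ∃ d ∈ f.support, ∃ i, ¬ ((d (Sum.inl i) : ℤ) ≤ d1 ∧
        (d (Sum.inr i) : ℤ) ≤ (N - 1) + s * (d (Sum.inl i) : ℤ)) := by
      by_contra hcon
      push Not at hcon
      exact hS1 fun d hd i => by
        have := hcon d hd i
        tauto
    obtain ⟨d, hd, i, hdi⟩ := this
    have h1 := hS d hd i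
    refine ⟨(d, i), (hSmem _ _).2 ⟨hd, ?_⟩⟩
    by_contra hne
    apply hdi
    refine ⟨h1.1, ?_⟩
    have := lt_of_le_of_ne h1.2 hne
    omega
  obtain ⟨⟨μ₁, k₁⟩, hμ₁, hmax₁⟩ := Finset.exists_max_image S
    (fun q => ∑ l, q.1 (Sum.inl l) ^ 2) hSne
  set Q := ∑ l, μ₁ (Sum.inl l) ^ 2 with hQdef
  obtain ⟨⟨μ, k₀⟩, hμk, hmin⟩ := Finset.exists_min_image
    (S.filter fun q => ∑ l, q.1 (Sum.inl l) ^ 2 = Q) (fun q => q.1 (Sum.inl q.2))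
    ⟨(μ₁, k₁), mem_filter.2 ⟨hμ₁, rfl⟩⟩
  simp only at hmin
  obtain ⟨hμS, hμQ⟩ := mem_filter.1 hμk
  simp only at hμQ
  obtain ⟨hμ, hμt⟩ := (hSmem _ _).1 hμS
  set p := μ (Sum.inl k₀) with hpdef
  have hQ : ∀ ν ∈ f.support, ∀ k, (ν (Sum.inr k) : ℤ) = N + s * ν (Sum.inl k) →
      ∑ l, ν (Sum.inl l) ^ 2 ≤ Q := fun ν hν k hk => hmax₁ (ν, k) ((hSmem _ _).2 ⟨hν, hk⟩)
  have hp : ∀ ν ∈ f.support, ∀ k, (ν (Sum.inr k) : ℤ) = N + s * ν (Sum.inl k) →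
      ∑ l, ν (Sum.inl l) ^ 2 = Q → p ≤ ν (Sum.inl k) :=
    fun ν hν k hk hQ => hmin (ν, k) (mem_filter.2 ⟨(hSmem _ _).2 ⟨hν, hk⟩, hQ⟩)
  -- sort the points by column, the extremal point last in its column
  set key : Fin n → ℕ := fun k => 2 * μ (Sum.inl k) + if k = k₀ then 1 else 0 with hkey
  set σ := Tuple.sort key with hσ
  have hkm : Monotone (key ∘ σ) := Tuple.monotone_sort _
  set a : Fin n → ℕ := (fun k => μ (Sum.inl k)) ∘ σ with ha
  set b₀ : Fin n → ℕ := (fun k => μ (Sum.inr k)) ∘ σ with hb₀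
  set j₀ := σ.symm k₀ with hj₀
  have hkσ : ∀ j, (key ∘ σ) j = 2 * a j + if j = j₀ then 1 else 0 := by
    intro j
    have : σ j = k₀ ↔ j = j₀ := by rw [hj₀, Equiv.eq_symm_apply]
    simp only [hkey, ha, Function.comp, this]
  have ham : Monotone a := by
    intro i j hij
    have := hkm hij
    rw [hkσ, hkσ] at this
    split_ifs at this <;> omega
  have hlast : ∀ j, j₀ < j → a j₀ < a j := by
    intro j hj
    have := hkm hj.le
    rw [hkσ, hkσ, if_pos rfl, if_neg hj.ne'] at this
    omega
  have haj₀ : a j₀ = p := by simp [ha, hj₀, hpdef]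
  have hc : MvPolynomial.coeff (xyExp a b₀) f ≠ 0 := by
    rw [Ne, ha, hb₀, Ar_coeff_perm hf, xyExp_eta]
    exact MvPolynomial.mem_support_iff.1 hμ
  have hsum : ∑ k, a k ^ 2 = Q := by
    rw [← hμQ]; exact Equiv.sum_comp σ (fun k => μ (Sum.inl k) ^ 2)
  set tp := b₀ j₀ with htp
  have htp' : (tp : ℤ) = N + s * p := by
    rw [← hμt]; simp [htp, hb₀, hj₀]
  have hdef : ∀ b : Fin n → ℕ, MvPolynomial.coeff (xyExp a b) f ≠ 0 → b j₀ = tp → ∀ j, j ≠ j₀ →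
      (b j : ℤ) + multOff r a ∅ j j₀ + (if a j < p then 1 else 0) ≤ N + s * a j := by
    intro b hb hbj j hj
    have := deficit_bound hf hS Q p hQ hp (xyExp a b) (MvPolynomial.mem_support_iff.2 hb) j₀
      (by simp only [xyExp_inr, xyExp_inl, hbj, haj₀]; exact htp') hsum haj₀ j hj
    rw [multOff_abs, haj₀]
    exact this
  obtain ⟨b', β, hb', hbc, hbZ, hdeg, hmono⟩ := exists_monomial hf a {j₀} (fun _ => tp)
    (by
      intro ν hν hz
      obtain ⟨h1, h2⟩ := hz j₀ (mem_singleton_self _)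
      rw [hsum]
      exact hQ ν hν j₀ (by rw [h1, h2, haj₀]; exact htp'))
    ⟨b₀, hc, by intro z hz; rw [mem_singleton.1 hz]⟩
    (fun j => if j = j₀ then tp else
      (N + s * a j - multOff r a ∅ j j₀ - (if a j < p then 1 else 0)).toNat)
    (by
      intro b hb hz j
      have hz' := hz j₀ (mem_singleton_self _)
      split_ifs with hj h2
      · rw [hj, hz']
      · have := hdef b hb hz' j hj
        rw [if_pos h2] at this
        omega
      · have := hdef b hb hz' j hj
        rw [if_neg h2] at this
        omega)
  have hbj₀ : b' j₀ = tp := hbZ j₀ (mem_singleton_self _)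
  have hmsym : ∀ j, j ≠ j₀ → multOff r a ∅ j₀ j = multOff r a ∅ j j₀ :=
    fun j _ => multOff_comm _ _ _ _ _
  set b : Fin n → ℤ := fun j => if j = j₀ then N + s * a j₀ - highSum r (toInt a) j₀ else
    b' j + if j₀ < j then max ((r : ℤ) - ((a j : ℤ) - a j₀)) 0 else 0 with hb
  have hbeq : ∀ j, j ≠ j₀ → b j = lowSum r (toInt a) j + β j := by
    intro j hj
    have h1 := sum_multOff_singleton (r := r) a (univ.filter (· < j)) hj
    have h2 := sum_multOff_low (r := r) ham j
    have h3 := hb' j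
    simp only [hb, if_neg hj]
    rw [← h2]
    by_cases hlt : j₀ < j
    · rw [if_pos hlt, ← multOff_cast (Z := ∅) ham hlt.le (by simp) (by simp)]
      rw [if_pos (by simp [hlt])] at h1
      omega
    · rw [if_neg hlt]
      rw [if_neg (by simp [hlt])] at h1
      omega
  have hfull : ∀ j, ((∑ k ∈ univ.erase j, multOff r a ∅ k j : ℕ) : ℤ) =
      lowSum r (toInt a) j + highSum r (toInt a) j := by
    intro j
    rw [sum_erase_split, Nat.cast_add, sum_multOff_low ham, sum_multOff_high ham]
  have hup : ∀ j, j ≠ j₀ → b j + highSum r (toInt a) j + (if a j < p then 1 else 0) ≤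
      N + s * a j := by
    intro j hj
    have h1 := sum_multOff_singleton (r := r) a (univ.erase j) hj
    rw [if_pos (by simp [hj.symm])] at h1
    have h2 := hfull j
    have h3 := hdeg j
    have h4 := hbeq j hj
    have h5 := hdef b' hbc hbj₀ j hj
    rw [if_neg hj] at h3
    have h6 := hmsym j hj
    split_ifs at h3 h5 ⊢ <;> omega
  have hasn : ∀ j, 0 ≤ s * (a j : ℤ) := fun j => mul_nonneg hs (by positivity)
  have hbj : b j₀ = N + s * a j₀ - highSum r (toInt a) j₀ := by simp [hb]
  refine ⟨a, b', b, j₀, ?_, ?_, ?_, hbc⟩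
  · rw [rlex_iff (by positivity)]
    refine ⟨fun i j hij => by simpa [toInt] using ham hij,
      fun j => ⟨by simp [toInt], (hS _ (MvPolynomial.mem_support_iff.2 hbc) j).1⟩, ?_, ?_⟩
    · intro j
      simp only [toInt]
      by_cases hj : j = j₀
      · rw [hj, hbj]
        have h1 := hfull j₀
        have h2 := sum_erase_multOff_le (r := r) a j₀
        have h3 := hasn j₀
        constructor <;> linarith
      · have h1 := hbeq j hj
        have h2 := hup j hj
        constructor
        · rw [h1]; simp
        · split_ifs at h2 <;> linarith
    · intro i j hij haij
      have haij' : a i = a j := by simpa [toInt] using haij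
      have hi : i ≠ j₀ := by
        rintro rfl
        have := hlast j hij
        omega
      have h1 := hbeq i hi
      by_cases hj : j = j₀
      · have h2 := hup i hi
        have h3 := sum_erase_multOff_congr (r := r) a haij'
        have h4 := hfull i
        have h5 := hfull j
        rw [h3, h5] at h4
        rw [hj] at haij' h4 ⊢
        rw [hbj, ← haij']
        split_ifs at h2 <;> linarith
      · have h2 := hbeq j hj
        have h3 := hmono i j hij haij' (by simpa using hi) (by simpa using hj)
        rw [h1, h2]
        have : (β i : ℤ) ≤ β j := by exact_mod_cast h3
        linarith
  · refine ⟨hbj, ?_, ?_⟩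
    · intro j hj
      have hlt : a j < a j₀ := by simpa [toInt] using hj
      have hne : j ≠ j₀ := by rintro rfl; exact lt_irrefl _ hlt
      have := hup j hne
      rw [if_pos (by rw [← haj₀]; exact hlt)] at this
      simp only [toInt] at this ⊢
      linarith
    · intro j hj
      simpa [toInt] using hlast j hj
  · funext j
    unfold topExp
    by_cases hj : j = j₀
    · rw [if_pos hj, hj]
      simp only [toInt, hbj₀, haj₀, htp']
    · rw [if_neg hj]
      simp only [hb, if_neg hj, toInt]
      ring

/-! ### Sections from products of alternants -/

lemma weight_prod_le {σ ι : Type*} (w : (σ →₀ ℕ) →+ ℕ) (S : Finset ι) (P : ι → MvPolynomial σ ℂ)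
    (c : ι → ℕ) (h : ∀ k ∈ S, ∀ μ ∈ (P k).support, w μ ≤ c k) :
    ∀ μ ∈ (∏ k ∈ S, P k).support, w μ ≤ ∑ k ∈ S, c k := by
  classical
  induction S using Finset.induction_on with
  | empty =>
    intro μ hμ
    rw [Finset.prod_empty, MvPolynomial.mem_support_iff, MvPolynomial.coeff_one] at hμ
    have : (0 : σ →₀ ℕ) = μ := by simpa using hμ
    simp [← this]
  | insert t S ht ih =>
    intro μ hμ
    rw [Finset.prod_insert ht] at hμ
    obtain ⟨u, hu, v, hv, rfl⟩ := Finset.mem_add.1 (MvPolynomial.support_mul _ _ hμ)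
    rw [map_add, Finset.sum_insert ht]
    exact add_le_add (h t (by simp) u hu) (ih (fun k hk => h k (by simp [hk])) v hv)

/-- The alternant `∑_τ sgn(τ) ∏_j x_j^{a_{τ(j)}} y_j^{q_{τ(j)}}`. -/
def alternant {n : ℕ} (a q : Fin n → ℕ) : PolyRing n :=
  ∑ τ : Equiv.Perm (Fin n), ((Equiv.Perm.sign τ : ℤ) : ℂ) •
    MvPolynomial.monomial (xyExp (a ∘ τ) (q ∘ τ)) 1

lemma xyExp_mapDomain {n : ℕ} (a q : Fin n → ℕ) (σ : Equiv.Perm (Fin n)) :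
    (xyExp a q).mapDomain (Equiv.sumCongr σ σ) = xyExp (a ∘ σ.symm) (q ∘ σ.symm) := by
  rw [← Finsupp.equivMapDomain_eq_mapDomain]
  ext (i | i) <;> simp [Finsupp.equivMapDomain_apply]

lemma alternant_isAlternating {n : ℕ} (a q : Fin n → ℕ) : IsAlternating n (alternant a q) := by
  intro σ
  rw [alternant, map_sum, Finset.smul_sum, ← Equiv.sum_comp (Equiv.mulRight σ)]
  refine Finset.sum_congr rfl fun τ _ => ?_
  rw [map_smul, MvPolynomial.rename_monomial, xyExp_mapDomain, smul_smul]
  congr 1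
  · simp [mul_comm]
  · congr 2; ext (i | i) <;> simp

lemma alternant_support {n : ℕ} {a q : Fin n → ℕ} {μ : Fin n ⊕ Fin n →₀ ℕ}
    (h : μ ∈ (alternant a q).support) :
    ∃ τ : Equiv.Perm (Fin n), μ = xyExp (a ∘ τ) (q ∘ τ) := by
  classical
  by_contra hc
  push Not at hc
  rw [MvPolynomial.mem_support_iff, alternant, MvPolynomial.coeff_sum] at h
  apply h
  refine Finset.sum_eq_zero fun τ _ => ?_
  rw [MvPolynomial.coeff_smul, MvPolynomial.coeff_monomial, if_neg (hc τ).symm, smul_zero]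

/-- The weight `∑_j j (M μ_{x_j} + μ_{y_j})`. -/
def lexWeight (n M : ℕ) : (Fin n ⊕ Fin n →₀ ℕ) →+ ℕ :=
  Finsupp.weight (Sum.elim (fun j : Fin n => (j : ℕ) * M) (fun j : Fin n => (j : ℕ)))

lemma lexWeight_xyExp {n M : ℕ} (a q : Fin n → ℕ) :
    lexWeight n M (xyExp a q) = ∑ j : Fin n, (M * a j + q j) * (j : ℕ) := by
  rw [lexWeight, Finsupp.weight_apply, Finsupp.sum_fintype _ _ (by simp)]
  rw [Fintype.sum_sum_type, ← Finset.sum_add_distrib]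
  refine Finset.sum_congr rfl fun j _ => ?_
  simp
  ring

/-- A strict rearrangement inequality for strictly increasing sequences. -/
lemma rearrange_lt {n : ℕ} {c : Fin n → ℕ} (hc : StrictMono c) {τ : Equiv.Perm (Fin n)}
    (hτ : τ ≠ 1) : ∑ j, c (τ j) * (j : ℕ) < ∑ j, c j * (j : ℕ) := by
  have hm : Monovary c (fun j : Fin n => (j : ℕ)) := fun i j h => hc.monotone (Fin.lt_def.2 h).le
  rw [hm.sum_comp_perm_mul_lt_sum_mul_iff]
  intro h
  apply hτ
  have h1 : StrictMono τ := by
    intro i j hij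
    have h2 : c (τ i) ≤ c (τ j) := h (Fin.lt_def.1 hij)
    exact lt_of_le_of_ne (hc.le_iff_le.1 h2) (fun e => hij.ne (τ.injective e))
  have h2 : (τ : Fin n → Fin n) = id := h1.range_inj strictMono_id |>.1 (by simp)
  ext i
  simp [h2]

lemma alternant_isLead {n M : ℕ} {a q : Fin n → ℕ} (hc : StrictMono fun j => M * a j + q j) :
    IsLead (lexWeight n M) (alternant a q) (xyExp a q) := by
  classical
  have key : ∀ τ : Equiv.Perm (Fin n), τ ≠ 1 →
      lexWeight n M (xyExp (a ∘ τ) (q ∘ τ)) < lexWeight n M (xyExp a q) := by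
    intro τ hτ
    rw [lexWeight_xyExp, lexWeight_xyExp]
    exact rearrange_lt hc hτ
  refine ⟨?_, ?_⟩
  · rw [alternant, MvPolynomial.coeff_sum, Finset.sum_eq_single_of_mem 1 (mem_univ _)]
    · simp
    · intro τ _ hτ
      rw [MvPolynomial.coeff_smul, MvPolynomial.coeff_monomial, if_neg, smul_zero]
      intro h
      exact (key τ hτ).ne (by rw [h])
  · intro m' hm' hne
    obtain ⟨τ, rfl⟩ := alternant_support hm'
    apply key
    rintro rfl
    exact hne rfl

lemma sum_div_add {r : ℕ} (hr : 1 ≤ r) (t : ℕ) : ∑ k ∈ range r, (t + k) / r = t := by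
  induction t with
  | zero =>
    refine Finset.sum_eq_zero fun k hk => ?_
    rw [zero_add]
    exact Nat.div_eq_of_lt (mem_range.1 hk)
  | succ t ih =>
    have h1 := Finset.sum_range_succ (fun k => (t + k) / r) r
    have h2 := Finset.sum_range_succ' (fun k => (t + k) / r) r
    rw [ih, Nat.add_div_right _ (by omega)] at h1
    rw [h1] at h2
    simp only [add_zero] at h2
    have h3 : ∀ k, t + 1 + k = t + (k + 1) := by intro k; omega
    simp only [h3]
    omega

lemma sum_dvd_succ {r : ℕ} (hr : 1 ≤ r) (t : ℕ) :
    ∑ k ∈ range r, (if r ∣ t + k + 1 then 1 else 0) = 1 := by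
  have h1 := sum_div_add hr (t + 1)
  have h2 : ∀ k, (t + 1 + k) / r = (t + k) / r + if r ∣ t + k + 1 then 1 else 0 := by
    intro k
    rw [← Nat.succ_div]; congr 1; omega
  simp only [h2, Finset.sum_add_distrib, sum_div_add hr t] at h1
  omega

lemma sum_div_eq {r : ℕ} (hr : 1 ≤ r) {t u : ℕ} (htu : t ≤ u) :
    ∑ k ∈ range r, (if (t + k) / r = (u + k) / r then 1 else 0) = r - (u - t) := by
  have h1 := sum_div_add hr t
  have h2 := sum_div_add hr u
  rcases le_total (u - t) r with h | h
  · have h3 : ∀ k, (u + k) / r + (if (t + k) / r = (u + k) / r then 1 else 0) =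
        (t + k) / r + 1 := by
      intro k
      have e1 : (t + k) / r ≤ (u + k) / r := Nat.div_le_div_right (by omega)
      have e2 : (u + k) / r ≤ (t + k + r) / r := Nat.div_le_div_right (by omega)
      rw [Nat.add_div_right _ (by omega)] at e2
      split_ifs <;> omega
    have h4 := Finset.sum_congr (rfl : range r = range r) (fun k _ => h3 k)
    rw [Finset.sum_add_distrib, Finset.sum_add_distrib, h1, h2] at h4
    simp only [sum_const, card_range, smul_eq_mul, mul_one] at h4
    omega
  · rw [Finset.sum_eq_zero]
    · omega
    · intro k _
      have e2 : (t + k + r) / r ≤ (u + k) / r := Nat.div_le_div_right (by omega)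
      rw [Nat.add_div_right _ (by omega)] at e2
      rw [if_neg (by omega)]

/-- The `x`-exponents of the `k`-th factor: the value `a_j` is split as evenly as possible. -/
def splitX {n : ℕ} (r : ℕ) (a : Fin n → ℕ) (k : ℕ) (j : Fin n) : ℕ := (a j + k) / r

/-- The `y`-exponents of the `k`-th factor: the rank of `j` among the points in the same column
of that factor, plus the excess `β_j` in exactly one of the factors. -/
def splitY {n : ℕ} (r : ℕ) (a β : Fin n → ℕ) (k : ℕ) (j : Fin n) : ℕ :=
  ∑ i ∈ univ.filter (· < j), (if splitX r a k i = splitX r a k j then 1 else 0) +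
    (if r ∣ a j + k + 1 then 1 else 0) * β j

lemma sum_splitY {n r : ℕ} (hr : 1 ≤ r) {a : Fin n → ℕ} (ham : Monotone a) (β : Fin n → ℕ)
    (j : Fin n) : ∑ k ∈ range r, splitY r a β k j =
      ∑ i ∈ univ.filter (· < j), (r - (a j - a i)) + β j := by
  unfold splitY splitX
  rw [Finset.sum_add_distrib, ← Finset.sum_mul, sum_dvd_succ hr, one_mul, Finset.sum_comm]
  congr 1
  refine Finset.sum_congr rfl fun i hi => ?_
  exact sum_div_eq hr (ham (mem_filter.1 hi).2.le)

lemma split_strictMono {n r M : ℕ} {a β : Fin n → ℕ} (ham : Monotone a)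
    (hβ : ∀ i j, i < j → a i = a j → β i ≤ β j) (k : ℕ) (hM : ∀ j, splitY r a β k j < M) :
    StrictMono fun j => M * splitX r a k j + splitY r a β k j := by
  intro i j hij
  have hx : splitX r a k i ≤ splitX r a k j := Nat.div_le_div_right (by have := ham hij.le; omega)
  rcases hx.lt_or_eq with h | h
  · have h1 := hM i
    have h2 : M * (splitX r a k i + 1) ≤ M * splitX r a k j := Nat.mul_le_mul_left _ h
    simp only
    rw [mul_add] at h2
    omega
  · have h1 : splitY r a β k i < splitY r a β k j := by
      unfold splitY
      have e1 : ∑ l ∈ univ.filter (· < i), (if splitX r a k l = splitX r a k i then 1 else 0) + 1 ≤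
          ∑ l ∈ univ.filter (· < j), (if splitX r a k l = splitX r a k j then 1 else 0) := by
        have hsub : insert i (univ.filter (· < i)) ⊆ univ.filter (· < j) := by
          intro l hl
          rw [mem_insert, mem_filter] at hl
          rw [mem_filter]
          rcases hl with rfl | hl
          · exact ⟨mem_univ _, hij⟩
          · exact ⟨mem_univ _, hl.2.trans hij⟩
        refine le_trans ?_ (Finset.sum_le_sum_of_subset hsub)
        rw [Finset.sum_insert (by simp), ← h, if_pos rfl]
        omega
      have e2 : (if r ∣ a i + k + 1 then 1 else 0) * β i ≤
          (if r ∣ a j + k + 1 then 1 else 0) * β j := by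
        rcases (ham hij.le).lt_or_eq with hlt | heq
        · rw [if_neg]
          · simp
          · intro hd
            have e3 : (a i + k + 1) / r ≤ (a j + k) / r := Nat.div_le_div_right (by omega)
            rw [Nat.succ_div, if_pos hd] at e3
            unfold splitX at h
            omega
        · rw [heq]
          exact Nat.mul_le_mul_left _ (hβ i j hij heq)
      omega
    simp only
    rw [h]
    omega

lemma sum_xyExp {n : ℕ} {ι : Type*} (S : Finset ι) (a q : ι → Fin n → ℕ) :
    ∑ k ∈ S, xyExp (a k) (q k) = xyExp (fun j => ∑ k ∈ S, a k j) (fun j => ∑ k ∈ S, q k j) := by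
  ext (i | i) <;> simp [Finsupp.finsetSum_apply]

/-- The total degree in the `y`-variables. -/
def yDeg (n : ℕ) : (Fin n ⊕ Fin n →₀ ℕ) →+ ℕ := Finsupp.weight (Sum.elim 0 1)

lemma yDeg_apply {n : ℕ} (μ : Fin n ⊕ Fin n →₀ ℕ) : yDeg n μ = ∑ i, μ (Sum.inr i) := by
  rw [yDeg, Finsupp.weight_apply, Finsupp.sum_fintype _ _ (by simp), Fintype.sum_sum_type]
  simp

/-- Every increasing tuple is the exponent of the leading monomial of a product of `r` alternants. -/
lemma exists_section {n r D M : ℕ} (hr : 1 ≤ r) {a b β : Fin n → ℕ} (ham : Monotone a)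
    (hb : ∀ j, b j = ∑ i ∈ univ.filter (· < j), (r - (a j - a i)) + β j)
    (hβ : ∀ i j, i < j → a i = a j → β i ≤ β j) (haD : ∀ j, a j ≤ D) (hM : ∀ j, b j < M) :
    ∃ f ∈ Ar n r, IsLead (lexWeight n M) f (xyExp a b) ∧
      ∀ μ ∈ f.support, (∀ i, μ (Sum.inl i) ≤ D) ∧ yDeg n μ ≤ ∑ j, b j := by
  have hby : ∀ j, ∑ k ∈ range r, splitY r a β k j = b j := fun j => by
    rw [sum_splitY hr ham, hb]
  refine ⟨∏ k ∈ range r, alternant (splitX r a k) (splitY r a β k), ?_, ?_, ?_⟩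
  · refine Submodule.subset_span ⟨fun m => alternant (splitX r a m) (splitY r a β m),
      fun m => alternant_isAlternating _ _, ?_⟩
    rw [← Fin.prod_univ_eq_prod_range (fun k => alternant (splitX r a k) (splitY r a β k))]
  · have h := IsLead.prod (ω := lexWeight n M) (range r)
      (P := fun k => alternant (splitX r a k) (splitY r a β k))
      (m := fun k => xyExp (splitX r a k) (splitY r a β k)) (fun k hk =>
        alternant_isLead (split_strictMono ham hβ k fun j => lt_of_le_of_lt (by
          rw [← hby j]
          exact Finset.single_le_sum (f := fun k => splitY r a β k j) (fun _ _ => Nat.zero_le _) hk)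
          (hM j)))
    rw [sum_xyExp] at h
    convert h using 2
    · funext j; exact (sum_div_add hr (a j)).symm
    · funext j; exact (hby j).symm
  · intro μ hμ
    constructor
    · intro i
      have h := weight_prod_le (Finsupp.applyAddHom (Sum.inl i : Fin n ⊕ Fin n)) (range r)
        (fun k => alternant (splitX r a k) (splitY r a β k)) (fun k => (D + k) / r) (by
          intro k _ μ hμ
          obtain ⟨τ, rfl⟩ := alternant_support hμ
          exact Nat.div_le_div_right (by have := haD (τ i); omega)) μ hμ
      rw [sum_div_add hr] at h
      exact h
    · have h := weight_prod_le (yDeg n) (range r)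
        (fun k => alternant (splitX r a k) (splitY r a β k)) (fun k => ∑ j, splitY r a β k j) (by
          intro k _ μ hμ
          obtain ⟨τ, rfl⟩ := alternant_support hμ
          rw [yDeg_apply]
          exact (Equiv.sum_comp τ (splitY r a β k)).le) μ hμ
      rw [Finset.sum_comm] at h
      simpa only [hby] using h

/-- Polynomials with pairwise distinct leading monomials are linearly independent. -/
lemma linearIndependent_of_isLead {σ ι : Type*} (ω : (σ →₀ ℕ) →+ ℕ) (f : ι → MvPolynomial σ ℂ)
    (m : ι → σ →₀ ℕ) (hm : Function.Injective m) (h : ∀ i, IsLead ω (f i) (m i)) :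
    LinearIndependent ℂ f := by
  classical
  rw [linearIndependent_iff']
  intro S g hg
  by_contra hc
  push Not at hc
  obtain ⟨i₀, hi₀, hgi₀⟩ := hc
  obtain ⟨i, hi, hmax⟩ := Finset.exists_max_image (S.filter fun i => g i ≠ 0) (fun i => ω (m i))
    ⟨i₀, mem_filter.2 ⟨hi₀, hgi₀⟩⟩
  rw [mem_filter] at hi
  have h1 := congrArg (MvPolynomial.coeff (m i)) hg
  rw [MvPolynomial.coeff_sum, Finset.sum_eq_single_of_mem i hi.1, MvPolynomial.coeff_smul,
    MvPolynomial.coeff_zero] at h1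
  · exact mul_ne_zero hi.2 (h i).1 h1
  · intro j hj hji
    rw [MvPolynomial.coeff_smul, smul_eq_mul]
    by_contra h0
    have h2 := (h j).2 (m i) (MvPolynomial.mem_support_iff.2 (right_ne_zero_of_mul h0))
      (fun e => hji (hm e).symm)
    have h3 := hmax j (mem_filter.2 ⟨hj, left_ne_zero_of_mul h0⟩)
    omega

/-! ### Dimension count -/

/-- Polynomials of total degree at most `e` in the `y`-variables. -/
def yDegLE (n e : ℕ) : Submodule ℂ (PolyRing n) where
  carrier := {f | ∀ μ ∈ f.support, yDeg n μ ≤ e}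
  add_mem' := by
    intro f g hf hg μ hμ
    rcases Finset.mem_union.mp (MvPolynomial.support_add hμ) with h | h
    · exact hf μ h
    · exact hg μ h
  zero_mem' := by
    intro μ hμ
    simp at hμ
  smul_mem' := by
    intro c f hf μ hμ
    exact hf μ (MvPolynomial.support_smul hμ)

/-- The space of sections for the bound `N`, of total `y`-degree at most `e`. -/
def secDeg (n r : ℕ) (s d1 N : ℤ) (e : ℕ) : Submodule ℂ (PolyRing n) :=
  (Ar n r ⊓ SuppInPoly n s d1 N) ⊓ yDegLE n e

/-- The increasing tuples for the bound `N`, with `∑_j b_j ≤ e`. -/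
def incDeg (n r : ℕ) (s d1 N : ℤ) (e : ℕ) : Set ((Fin n → ℤ) × (Fin n → ℤ)) :=
  {p | RLexIncIn n s d1 N r p.1 p.2 ∧ ∑ j, p.2 j ≤ e}

/-- The inverse of `toInt` on nonnegative vectors. -/
def natPart {n : ℕ} (a : Fin n → ℤ) (j : Fin n) : ℕ := (a j).toNat

lemma natPart_toInt {n : ℕ} (a : Fin n → ℕ) : natPart (toInt a) = a := by
  funext j; simp [natPart, toInt]

lemma toInt_natPart {n : ℕ} {a : Fin n → ℤ} (h : ∀ j, 0 ≤ a j) : toInt (natPart a) = a := by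
  funext j; simp [natPart, toInt, h j]

lemma rlex_bounds {n r : ℕ} {s d1 N : ℤ} (hs : 0 ≤ s) {a b : Fin n → ℤ}
    (h : RLexIncIn n s d1 N r a b) (j : Fin n) :
    0 ≤ a j ∧ a j ≤ d1 ∧ 0 ≤ b j ∧ b j ≤ N + s * d1 := by
  obtain ⟨-, h1, h2, -⟩ := (rlex_iff (by positivity) a b).1 h
  refine ⟨(h1 j).1, (h1 j).2, (lowSum_nonneg _ _ _).trans (h2 j).1, (h2 j).2.trans ?_⟩
  have := highSum_nonneg (r : ℤ) a j
  have := mul_le_mul_of_nonneg_left (h1 j).2 hs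
  linarith

lemma rlex_finite (n r : ℕ) {s : ℤ} (d1 N : ℤ) (hs : 0 ≤ s) :
    {p : (Fin n → ℤ) × (Fin n → ℤ) | RLexIncIn n s d1 N r p.1 p.2}.Finite := by
  classical
  refine (Set.finite_Icc ((fun _ => 0, fun _ => 0) : (Fin n → ℤ) × (Fin n → ℤ))
    (fun _ => d1, fun _ => N + s * d1)).subset ?_
  rintro ⟨a, b⟩ h
  have := rlex_bounds hs h
  exact ⟨⟨fun j => (this j).1, fun j => (this j).2.2.1⟩,
    ⟨fun j => (this j).2.1, fun j => (this j).2.2.2⟩⟩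

/-- Reading off the coefficients at a family of monomials. -/
def coeffMap {n : ℕ} {ι : Type*} (E : ι → Fin n ⊕ Fin n →₀ ℕ) : PolyRing n →ₗ[ℂ] (ι → ℂ) :=
  LinearMap.pi fun p => MvPolynomial.lcoeff ℂ (E p)

lemma coeffMap_apply {n : ℕ} {ι : Type*} (E : ι → Fin n ⊕ Fin n →₀ ℕ) (f : PolyRing n) (p : ι) :
    coeffMap E f p = MvPolynomial.coeff (E p) f := rfl

/-- The upper bound: a section is determined by its coefficients at the increasing tuples. -/
lemma sections_upper {n r : ℕ} {s d1 N : ℤ} (hs : 0 ≤ s) :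
    FiniteDimensional ℂ ↥(Ar n r ⊓ SuppInPoly n s d1 N) ∧
      Module.finrank ℂ ↥(Ar n r ⊓ SuppInPoly n s d1 N) ≤
        Set.ncard {p : (Fin n → ℤ) × (Fin n → ℤ) | RLexIncIn n s d1 N r p.1 p.2} := by
  set T := {p : (Fin n → ℤ) × (Fin n → ℤ) | RLexIncIn n s d1 N r p.1 p.2} with hT
  have : Finite T := rlex_finite n r d1 N hs
  have := Fintype.ofFinite T
  set φ := (coeffMap fun p : T => xyExp (natPart p.1.1) (natPart p.1.2)).comp
    (Ar n r ⊓ SuppInPoly n s d1 N).subtype with hφ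
  have hinj : Function.Injective φ := by
    rw [← LinearMap.ker_eq_bot, LinearMap.ker_eq_bot']
    rintro ⟨f, hf, hS⟩ h0
    by_contra hne
    obtain ⟨a, b, hab, hc⟩ := exists_rlex_coeff hf hS (fun h => hne (Subtype.ext h))
    have := congrFun h0 ⟨(toInt a, toInt b), hab⟩
    apply hc
    simpa [hφ, coeffMap_apply, natPart_toInt] using this
  refine ⟨Module.Finite.of_injective φ hinj, ?_⟩
  have h1 := LinearMap.finrank_le_finrank_of_injective hinj
  rwa [Module.finrank_fintype_fun_eq_card, ← Nat.card_eq_fintype_card, Nat.card_coe_set_eq] at h1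

lemma secDeg_finite {n r : ℕ} {s d1 N : ℤ} (hs : 0 ≤ s) (e : ℕ) :
    FiniteDimensional ℂ ↥(secDeg n r s d1 N e) := by
  have := (sections_upper (n := n) (r := r) (d1 := d1) (N := N) hs).1
  exact Submodule.finiteDimensional_of_le inf_le_left

lemma incDeg_finite {n r : ℕ} {s d1 N : ℤ} (hs : 0 ≤ s) (e : ℕ) :
    (incDeg n r s d1 N e).Finite := (rlex_finite n r d1 N hs).subset fun _ h => h.1

open Classical in
/-- The monomial detecting a tuple which is increasing for `N` but not for `N - 1`. The value
`0`, taken when there is no distinguished index, is never used. -/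
def topMonomial {n : ℕ} (r : ℕ) (s N : ℤ) (p : (Fin n → ℤ) × (Fin n → ℤ)) :
    Fin n ⊕ Fin n →₀ ℕ :=
  if h : ∃ j₀, IsTopIndex s N r p.1 p.2 j₀ then
    xyExp (natPart p.1) (natPart (topExp s N r p.1 p.2 h.choose)) else 0

/-- Lowering the bound from `N` to `N - 1` loses at most as many dimensions as it loses increasing
tuples: the lost tuples are those with a distinguished index, and a section for `N` whose
coefficients at the monomials attached to them vanish is a section for `N - 1`. -/
lemma secDeg_step {n r : ℕ} {s d1 N : ℤ} (hs : 0 ≤ s) (hN : (r : ℤ) * ((n : ℤ) - 1) ≤ N) (e : ℕ) :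
    Module.finrank ℂ ↥(secDeg n r s d1 N e) + (incDeg n r s d1 (N - 1) e).ncard ≤
      Module.finrank ℂ ↥(secDeg n r s d1 (N - 1) e) + (incDeg n r s d1 N e).ncard := by
  have hsub : incDeg n r s d1 (N - 1) e ⊆ incDeg n r s d1 N e := by
    rintro ⟨a, b⟩ ⟨h, he⟩
    refine ⟨?_, he⟩
    obtain ⟨h1, h2, h3, h4⟩ := (rlex_iff (by positivity) _ _).1 h
    exact (rlex_iff (by positivity) _ _).2 ⟨h1, h2, fun j => ⟨(h3 j).1, by
      have := (h3 j).2; linarith⟩, h4⟩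
  set T := incDeg n r s d1 N e \ incDeg n r s d1 (N - 1) e with hT
  have hcard : T.ncard + (incDeg n r s d1 (N - 1) e).ncard = (incDeg n r s d1 N e).ncard :=
    Set.ncard_sdiff_add_ncard_of_subset hsub (incDeg_finite hs e)
  have : Finite T := (incDeg_finite hs e).subset Set.sdiff_subset
  have := Fintype.ofFinite T
  have hfin := secDeg_finite (n := n) (r := r) (d1 := d1) (N := N) hs e
  have hfin' := secDeg_finite (n := n) (r := r) (d1 := d1) (N := N - 1) hs e
  set φ := (coeffMap fun p : T => topMonomial r s N p.1).comp
    (secDeg n r s d1 N e).subtype with hφ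
  have hker : (LinearMap.ker φ).map (secDeg n r s d1 N e).subtype ≤ secDeg n r s d1 (N - 1) e := by
    rintro _ ⟨⟨f, ⟨hf, hS⟩, he⟩, h0, rfl⟩
    refine ⟨⟨hf, ?_⟩, he⟩
    by_contra hS1
    obtain ⟨a, b', b, j₀, hab, htop, hb', hc⟩ := exists_top_coeff hs hN hf hS hS1
    have hp : ((toInt a, b) : (Fin n → ℤ) × (Fin n → ℤ)) ∈ T := by
      refine ⟨⟨hab, ?_⟩, ?_⟩
      · have h1 := he _ (MvPolynomial.mem_support_iff.2 hc)
        rw [yDeg_apply] at h1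
        simp only
        rw [← sum_topExp htop, ← hb']
        simp only [toInt]
        exact_mod_cast h1
      · rintro ⟨h1, -⟩
        have h2 := (((rlex_iff (by positivity) _ _).1 h1).2.2.1 j₀).2
        simp only at h2
        rw [htop.1] at h2
        linarith
    apply hc
    have h1 := congrFun (LinearMap.mem_ker.1 h0) ⟨_, hp⟩
    have h2 : topMonomial r s N ((toInt a, b) : (Fin n → ℤ) × (Fin n → ℤ)) = xyExp a b' := by
      have hex : ∃ j₀, IsTopIndex s N r (toInt a) b j₀ := ⟨j₀, htop⟩
      rw [topMonomial, dif_pos hex, hex.choose_spec.unique htop, ← hb', natPart_toInt, natPart_toInt]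
    rw [← h2]
    exact h1
  have h1 := LinearMap.finrank_range_add_finrank_ker φ
  have h2 : Module.finrank ℂ (LinearMap.range φ) ≤ T.ncard := by
    have := Submodule.finrank_le (LinearMap.range φ)
    rwa [Module.finrank_fintype_fun_eq_card, ← Nat.card_eq_fintype_card,
      Nat.card_coe_set_eq] at this
  have h3 : Module.finrank ℂ (LinearMap.ker φ) ≤ Module.finrank ℂ ↥(secDeg n r s d1 (N - 1) e) := by
    rw [LinearEquiv.finrank_eq (Submodule.equivSubtypeMap _ (LinearMap.ker φ))]
    exact Submodule.finrank_mono hker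
  omega

lemma secDeg_descend {n r : ℕ} {s d1 N : ℤ} (hs : 0 ≤ s) (hN : (r : ℤ) * ((n : ℤ) - 1) ≤ N)
    (e t : ℕ) :
    Module.finrank ℂ ↥(secDeg n r s d1 (N + t) e) + (incDeg n r s d1 N e).ncard ≤
      Module.finrank ℂ ↥(secDeg n r s d1 N e) + (incDeg n r s d1 (N + t) e).ncard := by
  induction t with
  | zero => rw [Nat.cast_zero, add_zero]
  | succ t ih =>
    have h := secDeg_step (n := n) (r := r) (d1 := d1) (N := N + (t + 1 : ℕ)) hs
      (by push_cast; linarith) e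
    have e1 : N + (t + 1 : ℕ) - 1 = N + t := by push_cast; ring
    rw [e1] at h
    omega

/-- For a bound `N ≥ e` the products of alternants give enough sections. -/
lemma incDeg_le_finrank {n r : ℕ} (hr : 1 ≤ r) {s d1 N : ℤ} (hs : 0 ≤ s) (hd1 : 0 ≤ d1) {e : ℕ}
    (he : (e : ℤ) ≤ N) :
    (incDeg n r s d1 N e).ncard ≤ Module.finrank ℂ ↥(secDeg n r s d1 N e) := by
  have hfin := secDeg_finite (n := n) (r := r) (d1 := d1) (N := N) hs e
  have : Finite (incDeg n r s d1 N e) := incDeg_finite hs e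
  have := Fintype.ofFinite (incDeg n r s d1 N e)
  have hex : ∀ p : incDeg n r s d1 N e, ∃ f ∈ secDeg n r s d1 N e,
      IsLead (lexWeight n (e + 1)) f (xyExp (natPart p.1.1) (natPart p.1.2)) := by
    rintro ⟨⟨a', b'⟩, hp, hsum⟩
    simp only at hp hsum ⊢
    have hbd := rlex_bounds hs hp
    obtain ⟨a, rfl⟩ : ∃ a, a' = toInt a := ⟨_, (toInt_natPart fun j => (hbd j).1).symm⟩
    obtain ⟨b, rfl⟩ : ∃ b, b' = toInt b := ⟨_, (toInt_natPart fun j => (hbd j).2.2.1).symm⟩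
    rw [natPart_toInt, natPart_toInt]
    obtain ⟨h1, h2, h3, h4⟩ := (rlex_iff (by positivity) _ _).1 hp
    have ham : Monotone a := fun i j hij => by simpa [toInt] using h1 hij
    have hlow : ∀ j, lowSum r (toInt a) j =
        ((∑ i ∈ univ.filter (· < j), (r - (a j - a i)) : ℕ) : ℤ) := by
      intro j
      rw [lowSum, Nat.cast_sum]
      refine Finset.sum_congr rfl fun i hi => ?_
      have := ham (mem_filter.1 hi).2.le
      simp only [toInt]
      omega
    have hbsum : ∑ j, b j ≤ e := by
      simp only [toInt] at hsum
      exact_mod_cast hsum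
    obtain ⟨f, hf, hlead, hsupp⟩ := exists_section (n := n) (r := r) (D := d1.toNat) (M := e + 1) hr
      (a := a) (b := b)
      (β := fun j => b j - ∑ i ∈ univ.filter (· < j), (r - (a j - a i))) ham
      (by
        intro j
        have := (h3 j).1
        rw [hlow] at this
        simp only [toInt] at this
        have h5 : ∑ i ∈ univ.filter (· < j), (r - (a j - a i)) ≤ b j := by exact_mod_cast this
        omega)
      (by
        intro i j hij haij
        have := h4 i j hij (by simp [toInt, haij])
        rw [hlow, hlow] at this
        simp only [toInt] at this
        omega)
      (by
        intro j
        have := (hbd j).2.1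
        simp only [toInt] at this
        omega)
      (fun j => Nat.lt_succ_of_le ((Finset.single_le_sum (f := b) (fun _ _ => Nat.zero_le _)
        (mem_univ j)).trans hbsum))
    refine ⟨f, ⟨⟨hf, ?_⟩, ?_⟩, hlead⟩
    · intro μ hμ i
      obtain ⟨hx, hy⟩ := hsupp μ hμ
      have hxi := hx i
      refine ⟨by omega, ?_⟩
      rw [yDeg_apply] at hy
      have hyi := Finset.single_le_sum (f := fun i => μ (Sum.inr i)) (fun _ _ => Nat.zero_le _)
        (mem_univ i)
      have : 0 ≤ s * (μ (Sum.inl i) : ℤ) := mul_nonneg hs (by positivity)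
      omega
    · intro μ hμ
      exact (hsupp μ hμ).2.trans hbsum
  choose F hF hlead using hex
  have hli : LinearIndependent ℂ (fun p => (⟨F p, hF p⟩ : ↥(secDeg n r s d1 N e))) := by
    apply LinearIndependent.of_comp (secDeg n r s d1 N e).subtype
    refine linearIndependent_of_isLead (lexWeight n (e + 1)) F _ ?_ hlead
    rintro ⟨⟨a, b⟩, hp⟩ ⟨⟨a', b'⟩, hp'⟩ h
    obtain ⟨h1, h2⟩ := xyExp_inj h
    have hbd := rlex_bounds hs hp.1
    have hbd' := rlex_bounds hs hp'.1
    simp only at h1 h2 hbd hbd'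
    have e1 : a = a' := by
      rw [← toInt_natPart fun j => (hbd j).1, h1, toInt_natPart fun j => (hbd' j).1]
    have e2 : b = b' := by
      rw [← toInt_natPart fun j => (hbd j).2.2.1, h2, toInt_natPart fun j => (hbd' j).2.2.1]
    simp [e1, e2]
  have h := hli.fintype_card_le_finrank
  rwa [← Nat.card_eq_fintype_card, Nat.card_coe_set_eq] at h

/-- Theorem 1.3 of the paper: for a Hirzebruch surface (parameter `s ≥ 0`)
and an ample line bundle (`r ≥ 1`, `d_1, d_2 > r(n−1)`), the subspace `W ⊆ A^r` of
polynomials whose support in each pair of variables `(x_i, y_i)` lies in `P_L` is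
finite-dimensional of dimension equal to the number of `r`-lexicographically increasing
`n`-tuples of integer points in `P_L`. -/
theorem dim_sections_eq_count (n : ℕ) (hn : 1 ≤ n) (s : ℤ) (hs : 0 ≤ s) (r : ℕ) (hr : 1 ≤ r)
    (d1 d2 : ℤ) (hd1 : (r : ℤ) * ((n : ℤ) - 1) < d1) (hd2 : (r : ℤ) * ((n : ℤ) - 1) < d2) :
    FiniteDimensional ℂ ↥(Ar n r ⊓ SuppInPoly n s d1 d2) ∧
      Module.finrank ℂ ↥(Ar n r ⊓ SuppInPoly n s d1 d2) =
        Set.ncard {p : (Fin n → ℤ) × (Fin n → ℤ) |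
          RLexIncIn n s d1 d2 (r : ℤ) p.1 p.2} := by
  obtain ⟨hfin, hle⟩ := sections_upper (n := n) (r := r) (d1 := d1) (N := d2) hs
  refine ⟨hfin, le_antisymm hle ?_⟩
  have h0 : 0 ≤ (r : ℤ) * ((n : ℤ) - 1) :=
    mul_nonneg (by positivity) (by have : (1 : ℤ) ≤ n := by exact_mod_cast hn
                                   linarith)
  have hd1_nonneg : 0 ≤ d1 := by linarith
  have hB : 0 ≤ (n : ℤ) * (d2 + s * d1) :=
    mul_nonneg (by positivity) (add_nonneg (by linarith) (mul_nonneg hs hd1_nonneg))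
  -- the condition `yDeg ≤ e` is vacuous for the bound `d2`
  obtain ⟨e, he⟩ := Int.eq_ofNat_of_zero_le hB
  have hsec : secDeg n r s d1 d2 e = Ar n r ⊓ SuppInPoly n s d1 d2 := by
    refine inf_eq_left.2 fun f hf μ hμ => ?_
    have h1 : ∑ i, (μ (Sum.inr i) : ℤ) ≤ ∑ _i : Fin n, (d2 + s * d1) := by
      refine Finset.sum_le_sum fun i _ => ?_
      obtain ⟨h2, h3⟩ := hf.2 μ hμ i
      have := mul_le_mul_of_nonneg_left h2 hs
      linarith
    rw [sum_const, card_univ, Fintype.card_fin, nsmul_eq_mul, he] at h1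
    rw [yDeg_apply]
    exact_mod_cast h1
  have hinc : incDeg n r s d1 d2 e = {p : (Fin n → ℤ) × (Fin n → ℤ) |
      RLexIncIn n s d1 d2 (r : ℤ) p.1 p.2} := by
    ext p
    refine ⟨fun h => h.1, fun h => ⟨h, ?_⟩⟩
    have h1 : ∑ i, p.2 i ≤ ∑ _i : Fin n, (d2 + s * d1) :=
      Finset.sum_le_sum fun i _ => (rlex_bounds hs h i).2.2.2
    rwa [sum_const, card_univ, Fintype.card_fin, nsmul_eq_mul, he] at h1
  have h1 := secDeg_descend (n := n) (r := r) (d1 := d1) (N := d2) hs hd2.le e e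
  have h2 := incDeg_le_finrank (n := n) (r := r) (d1 := d1) (N := d2 + e) hr hs hd1_nonneg (e := e)
    (by linarith)
  rw [hsec, hinc] at h1
  omega

end
end
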